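/- arXiv:1906.04938 — 5 statements merged into one kernel-verified Lean document; each statement's English description precedes it below -/
import Mathlib

section
/- Let f : ℝⁿ → ℝ be C¹, nonnegative, not identically zero, with compact support, c := max_{ℝⁿ} f > 0, and U := {x ∈ ℝⁿ : f(x) = c}; assume U contains a closed ball of radius n-1. Let v, w : ℝⁿ → ℝ be continuous, with v a viscosity subsolution and w a viscosity supersolution of -(div(Dv/|Dv|)+1)|Dv| = f(x) - c in ℝⁿ, and suppose there is a constant C > 0 such that -c|x| - c(n-1)·log(|x|+1) - C ≤ v(x) ≤ -c|x| + C and -c|x| - c(n-1)·log(|x|+1) - C ≤ w(x) ≤ -c|x| + C for all x ∈ ℝⁿ. If v ≤ w on U, then v ≤ w on all of ℝⁿ. -/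
open Set Filter Topology
open scoped RealInnerProductSpace

noncomputable section

/-- The trace of a continuous linear endomorphism of `ℝⁿ`. -/
def clmTrace {n : ℕ} (A : EuclideanSpace ℝ (Fin n) →L[ℝ] EuclideanSpace ℝ (Fin n)) : ℝ :=
  LinearMap.trace ℝ (EuclideanSpace ℝ (Fin n)) A.toLinearMap

/-- The (spatial) Hessian of `φ : ℝⁿ → ℝ` at `x`, as the derivative of the gradient. -/
def hess {n : ℕ} (φ : EuclideanSpace ℝ (Fin n) → ℝ) (x : EuclideanSpace ℝ (Fin n)) :
    EuclideanSpace ℝ (Fin n) →L[ℝ] EuclideanSpace ℝ (Fin n) :=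
  fderiv ℝ (gradient φ) x

/-- `tr((I - η⊗η) D²φ(x))` for a continuous linear map `A = D²φ(x)` and `η ∈ ℝⁿ`. -/
def trProj {n : ℕ} (A : EuclideanSpace ℝ (Fin n) →L[ℝ] EuclideanSpace ℝ (Fin n))
    (η : EuclideanSpace ℝ (Fin n)) : ℝ :=
  clmTrace A - ⟪A η, η⟫

/-- `v` is a viscosity subsolution of the stationary level-set equation
`-(div(Dv/|Dv|)+1)|Dv| = g(x)` on the open set `O ⊆ ℝⁿ`.  When the gradient of
the test function does not vanish one uses `η = Dφ/|Dφ|`, noting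
`div(Dφ/|Dφ|)·|Dφ| = tr((I - η⊗η) D²φ)`; when it vanishes, some `η` with `|η| ≤ 1`. -/
def StatSubsol {n : ℕ} (g : EuclideanSpace ℝ (Fin n) → ℝ) (O : Set (EuclideanSpace ℝ (Fin n)))
    (v : EuclideanSpace ℝ (Fin n) → ℝ) : Prop :=
  ∀ φ : EuclideanSpace ℝ (Fin n) → ℝ, ContDiff ℝ 2 φ →
    ∀ x₀ ∈ O, IsLocalMax (fun x => v x - φ x) x₀ →
      (gradient φ x₀ ≠ 0 →
        -(trProj (hess φ x₀) (‖gradient φ x₀‖⁻¹ • gradient φ x₀) + ‖gradient φ x₀‖) ≤ g x₀) ∧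
      (gradient φ x₀ = 0 →
        ∃ η : EuclideanSpace ℝ (Fin n), ‖η‖ ≤ 1 ∧ -(trProj (hess φ x₀) η) ≤ g x₀)

/-- Viscosity supersolution of the stationary level-set equation
`-(div(Dv/|Dv|)+1)|Dv| = g(x)` on the open set `O ⊆ ℝⁿ`. -/
def StatSupersol {n : ℕ} (g : EuclideanSpace ℝ (Fin n) → ℝ) (O : Set (EuclideanSpace ℝ (Fin n)))
    (v : EuclideanSpace ℝ (Fin n) → ℝ) : Prop :=
  ∀ φ : EuclideanSpace ℝ (Fin n) → ℝ, ContDiff ℝ 2 φ →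
    ∀ x₀ ∈ O, IsLocalMin (fun x => v x - φ x) x₀ →
      (gradient φ x₀ ≠ 0 →
        -(trProj (hess φ x₀) (‖gradient φ x₀‖⁻¹ • gradient φ x₀) + ‖gradient φ x₀‖) ≥ g x₀) ∧
      (gradient φ x₀ = 0 →
        ∃ η : EuclideanSpace ℝ (Fin n), ‖η‖ ≤ 1 ∧ -(trProj (hess φ x₀) η) ≥ g x₀)

/-- Spatial gradient of a space-time test function. -/
def sGrad {n : ℕ} (φ : EuclideanSpace ℝ (Fin n) → ℝ → ℝ) (x : EuclideanSpace ℝ (Fin n))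
    (t : ℝ) : EuclideanSpace ℝ (Fin n) :=
  gradient (fun y => φ y t) x

/-- Spatial Hessian of a space-time test function. -/
def sHess {n : ℕ} (φ : EuclideanSpace ℝ (Fin n) → ℝ → ℝ) (x : EuclideanSpace ℝ (Fin n))
    (t : ℝ) : EuclideanSpace ℝ (Fin n) →L[ℝ] EuclideanSpace ℝ (Fin n) :=
  fderiv ℝ (fun y => gradient (fun z => φ z t) y) x

/-- Time derivative of a space-time test function. -/
def tDeriv {n : ℕ} (φ : EuclideanSpace ℝ (Fin n) → ℝ → ℝ) (x : EuclideanSpace ℝ (Fin n))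
    (t : ℝ) : ℝ :=
  deriv (fun s => φ x s) t

/-- `u` is a viscosity subsolution of the level-set equation
`u_t - (div(Du/|Du|)+1)|Du| = f(x)` in `O × (0,∞)`: at any local maximum `(x₀,t₀)`,
`t₀ > 0`, `x₀ ∈ O`, of `u - φ` with `φ` C², the subsolution inequality holds, where
`(div(D_xφ/|D_xφ|)+1)|D_xφ| = tr((I - η⊗η) D_x²φ) + |D_xφ|` with `η = D_xφ/|D_xφ|`
if `D_xφ ≠ 0`, and with some `η`, `|η| ≤ 1`, and no `|D_xφ|` term if `D_xφ = 0`. -/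
def ParabSubsol {n : ℕ} (f : EuclideanSpace ℝ (Fin n) → ℝ) (O : Set (EuclideanSpace ℝ (Fin n)))
    (u : EuclideanSpace ℝ (Fin n) → ℝ → ℝ) : Prop :=
  ∀ φ : EuclideanSpace ℝ (Fin n) → ℝ → ℝ,
    ContDiff ℝ 2 (fun p : EuclideanSpace ℝ (Fin n) × ℝ => φ p.1 p.2) →
    ∀ x₀ ∈ O, ∀ t₀ : ℝ, 0 < t₀ →
      IsLocalMax (fun p : EuclideanSpace ℝ (Fin n) × ℝ => u p.1 p.2 - φ p.1 p.2) (x₀, t₀) →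
        (sGrad φ x₀ t₀ ≠ 0 →
          tDeriv φ x₀ t₀ -
            (trProj (sHess φ x₀ t₀) (‖sGrad φ x₀ t₀‖⁻¹ • sGrad φ x₀ t₀) + ‖sGrad φ x₀ t₀‖)
            ≤ f x₀) ∧
        (sGrad φ x₀ t₀ = 0 →
          ∃ η : EuclideanSpace ℝ (Fin n), ‖η‖ ≤ 1 ∧
            tDeriv φ x₀ t₀ - trProj (sHess φ x₀ t₀) η ≤ f x₀)

/-- Viscosity supersolution of the level-set equation
`u_t - (div(Du/|Du|)+1)|Du| = f(x)` in `O × (0,∞)`. -/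
def ParabSupersol {n : ℕ} (f : EuclideanSpace ℝ (Fin n) → ℝ) (O : Set (EuclideanSpace ℝ (Fin n)))
    (u : EuclideanSpace ℝ (Fin n) → ℝ → ℝ) : Prop :=
  ∀ φ : EuclideanSpace ℝ (Fin n) → ℝ → ℝ,
    ContDiff ℝ 2 (fun p : EuclideanSpace ℝ (Fin n) × ℝ => φ p.1 p.2) →
    ∀ x₀ ∈ O, ∀ t₀ : ℝ, 0 < t₀ →
      IsLocalMin (fun p : EuclideanSpace ℝ (Fin n) × ℝ => u p.1 p.2 - φ p.1 p.2) (x₀, t₀) →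
        (sGrad φ x₀ t₀ ≠ 0 →
          tDeriv φ x₀ t₀ -
            (trProj (sHess φ x₀ t₀) (‖sGrad φ x₀ t₀‖⁻¹ • sGrad φ x₀ t₀) + ‖sGrad φ x₀ t₀‖)
            ≥ f x₀) ∧
        (sGrad φ x₀ t₀ = 0 →
          ∃ η : EuclideanSpace ℝ (Fin n), ‖η‖ ≤ 1 ∧
            tDeriv φ x₀ t₀ - trProj (sHess φ x₀ t₀) η ≥ f x₀)

end


set_option linter.unusedSectionVars false

section Conv
variable {E : Type*} [NormedAddCommGroup E] [InnerProductSpace ℝ E] [FiniteDimensional ℝ E]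

theorem aux_exists_min (F : E → ℝ) (hF : LowerSemicontinuous F) (a B : ℝ) (ha : 0 < a)
    (hb : ∀ y, a * ‖y‖ ^ 2 - B ≤ F y) : ∃ y, ∀ z, F y ≤ F z := by
  obtain ⟨R, hR0, hR⟩ : ∃ R : ℝ, 0 < R ∧ F 0 + B ≤ a * R ^ 2 := by
    refine ⟨max 1 ((F 0 + B) / a), by positivity, ?_⟩
    have h1 : (1:ℝ) ≤ max 1 ((F 0 + B) / a) := le_max_left _ _
    have h2 : (F 0 + B) / a ≤ max 1 ((F 0 + B) / a) := le_max_right _ _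
    rw [div_le_iff₀ ha] at h2
    have h3 : max 1 ((F 0 + B) / a) ≤ max 1 ((F 0 + B) / a) ^ 2 := by nlinarith
    nlinarith
  obtain ⟨y, hy, hmin⟩ := LowerSemicontinuousOn.exists_isMinOn (f := F)
    (s := Metric.closedBall (0:E) R) ⟨0, by simp [hR0.le]⟩ (isCompact_closedBall _ _)
    (hF.lowerSemicontinuousOn _)
  refine ⟨y, fun z => ?_⟩
  by_cases hz : z ∈ Metric.closedBall (0:E) R
  · exact hmin hz
  · have h0 : F y ≤ F 0 := hmin (by simp [hR0.le] : (0:E) ∈ Metric.closedBall (0:E) R)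
    rw [mem_closedBall_zero_iff, not_le] at hz
    have := hb z
    have : R ^ 2 ≤ ‖z‖ ^ 2 := by gcongr
    nlinarith

/-- Data of the double convolution of `v`. -/
structure LL (k : ℝ) (v g U : E → ℝ) (P : E → E) : Prop where
  g1 : ∀ y z, v z - 3 * k * ‖y - z‖ ^ 2 ≤ g y
  g2 : ∀ y, ∃ z, g y = v z - 3 * k * ‖y - z‖ ^ 2
  u1 : ∀ x y, U x ≤ g y + 12 * k * ‖x - y‖ ^ 2
  u2 : ∀ x, U x = g (P x) + 12 * k * ‖x - P x‖ ^ 2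

theorem exists_LL (k : ℝ) (hk : 0 < k) (v : E → ℝ) (hv : Continuous v)
    (hb : ∀ z, v z ≤ 3 / 2 * k * ‖z‖ ^ 2) : ∃ g U P, LL k v g U P := by
  have h1 : ∀ y : E, ∃ z, ∀ z', v z' - 3 * k * ‖y - z'‖ ^ 2 ≤ v z - 3 * k * ‖y - z‖ ^ 2 := by
    intro y
    obtain ⟨z, hz⟩ := aux_exists_min (fun z => -(v z - 3 * k * ‖y - z‖ ^ 2))
      (by apply Continuous.lowerSemicontinuous; fun_prop) (k / 2) (6 * k * ‖y‖ ^ 2) (by positivity)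
      (by
        intro z
        have h0 := hb z
        have : 2 / 3 * ‖z‖ ^ 2 - 2 * ‖y‖ ^ 2 ≤ ‖y - z‖ ^ 2 := by
          rw [norm_sub_sq_real]
          have h3 : 0 ≤ ‖(3:ℝ) • y - z‖ ^ 2 := by positivity
          rw [norm_sub_sq_real, inner_smul_left, norm_smul] at h3
          simp at h3
          nlinarith
        nlinarith)
    exact ⟨z, fun z' => by have := hz z'; linarith⟩
  choose Z hZ using h1
  set g : E → ℝ := fun y => v (Z y) - 3 * k * ‖y - Z y‖ ^ 2 with hg
  have hlsc : LowerSemicontinuous g := by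
    intro y a ha
    have : ContinuousAt (fun y' => v (Z y) - 3 * k * ‖y' - Z y‖ ^ 2) y := by fun_prop
    filter_upwards [this.eventually (lt_mem_nhds ha)] with y' hy'
    exact lt_of_lt_of_le hy' (hZ y' (Z y))
  have h2 : ∀ x : E, ∃ y, ∀ y', g y + 12 * k * ‖x - y‖ ^ 2 ≤ g y' + 12 * k * ‖x - y'‖ ^ 2 := by
    intro x
    refine aux_exists_min (fun y => g y + 12 * k * ‖x - y‖ ^ 2) ?_ (3 * k)
      (12 * k * ‖x‖ ^ 2 - v 0) (by positivity) ?_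
    · apply hlsc.add
      apply Continuous.lowerSemicontinuous; fun_prop
    · intro y
      have := hZ y 0
      rw [sub_zero] at this
      have h3 : 0 ≤ ‖(2:ℝ) • x - y‖ ^ 2 := by positivity
      rw [norm_sub_sq_real, inner_smul_left, norm_smul] at h3
      simp at h3
      have h4 : ‖y‖ ^ 2 / 2 - ‖x‖ ^ 2 ≤ ‖x - y‖ ^ 2 := by
        rw [norm_sub_sq_real]; nlinarith
      simp only [hg]
      nlinarith
  choose P hP using h2
  exact ⟨g, fun x => g (P x) + 12 * k * ‖x - P x‖ ^ 2, P,
    ⟨fun y z => hZ y z, fun y => ⟨Z y, rfl⟩, fun x y => hP x y, fun x => rfl⟩⟩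

variable {k : ℝ} {v g U : E → ℝ} {P : E → E}

theorem LL.gmid (h : LL k v g U P) (y d : E) :
    2 * g y ≤ g (y + d) + g (y - d) + 6 * k * ‖d‖ ^ 2 := by
  obtain ⟨z, hz⟩ := h.g2 y
  have h1 := h.g1 (y + d) z
  have h2 := h.g1 (y - d) z
  have e1 : ‖y + d - z‖ ^ 2 + ‖y - d - z‖ ^ 2 = 2 * ‖y - z‖ ^ 2 + 2 * ‖d‖ ^ 2 := by
    rw [show y + d - z = (y - z) + d by abel, show y - d - z = (y - z) - d by abel,
      norm_add_sq_real, norm_sub_sq_real (y - z) d]; ring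
  have : 3 * k * (‖y + d - z‖ ^ 2 + ‖y - d - z‖ ^ 2) = 3 * k * (2 * ‖y - z‖ ^ 2 + 2 * ‖d‖ ^ 2) := by
    rw [e1]
  linarith

theorem LL.P_lip (h : LL k v g U P) (hk : 0 < k) (x x' : E) : ‖P x - P x'‖ ≤ 3 * ‖x - x'‖ := by
  set d := (1 / 2 : ℝ) • (P x - P x') with hd
  set m := (1 / 2 : ℝ) • (P x + P x') with hm
  have hp : P x = m + d := by rw [hd, hm]; module
  have hp' : P x' = m - d := by rw [hd, hm]; module
  have hg := h.gmid m d
  have a1 := h.u1 x m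
  have a2 := h.u1 x' m
  rw [h.u2, hp] at a1
  rw [h.u2, hp'] at a2
  have e1 : ‖x - (m + d)‖ ^ 2 + ‖x' - (m - d)‖ ^ 2 - ‖x - m‖ ^ 2 - ‖x' - m‖ ^ 2
      = 2 * ‖d‖ ^ 2 - 2 * ⟪x - x', d⟫ := by
    rw [show x - (m + d) = (x - m) - d by abel, show x' - (m - d) = (x' - m) + d by abel,
      norm_add_sq_real, norm_sub_sq_real (x - m) d, show x - x' = (x - m) - (x' - m) by abel,
      inner_sub_left (x - m)]; ring
  have e2 : 12 * k * (2 * ‖d‖ ^ 2 - 2 * ⟪x - x', d⟫) ≤ 6 * k * ‖d‖ ^ 2 := by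
    rw [← e1]; linarith
  have e3 : 3 * ‖d‖ ^ 2 ≤ 4 * ⟪x - x', d⟫ := by
    nlinarith
  have e4 := real_inner_le_norm (x - x') d
  have : P x - P x' = (2:ℝ) • d := by rw [hd]; module
  rw [this, norm_smul]
  simp only [Real.norm_ofNat]
  by_contra hc
  have h0 : 0 < ‖d‖ := by
    have := norm_nonneg (x - x'); linarith
  nlinarith

theorem LL.D_lip (h : LL k v g U P) (hk : 0 < k) :
    LipschitzWith (Real.toNNReal (96 * k)) (fun x => (24 * k) • (x - P x)) := by
  refine LipschitzWith.of_dist_le_mul fun x x' => ?_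
  rw [Real.coe_toNNReal _ (by positivity), dist_eq_norm, dist_eq_norm, ← smul_sub, norm_smul,
    Real.norm_of_nonneg (by positivity)]
  have h1 := h.P_lip hk x x'
  have : ‖x - P x - (x' - P x')‖ ≤ ‖x - x'‖ + ‖P x - P x'‖ := by
    rw [show x - P x - (x' - P x') = (x - x') - (P x - P x') by abel]
    exact norm_sub_le _ _
  nlinarith

theorem LL.upper (h : LL k v g U P) (x y : E) :
    U y ≤ U x + ⟪(24 * k) • (x - P x), y - x⟫ + 12 * k * ‖y - x‖ ^ 2 := by
  have h1 := h.u1 y (P x)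
  have h2 := h.u2 x
  have e : ‖y - P x‖ ^ 2 = ‖x - P x‖ ^ 2 + 2 * ⟪x - P x, y - x⟫ + ‖y - x‖ ^ 2 := by
    rw [← norm_add_sq_real]; congr 2; abel
  rw [real_inner_smul_left]
  rw [e] at h1
  linarith

theorem LL.hasGradientAt (h : LL k v g U P) (hk : 0 < k) (x : E) :
    HasGradientAt U ((24 * k) • (x - P x)) x := by
  rw [hasGradientAt_iff_hasFDerivAt, hasFDerivAt_iff_isLittleO]
  have : (fun y => U y - U x - ⟪(24 * k) • (x - P x), y - x⟫) =O[𝓝 x]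
      fun y => ‖y - x‖ ^ 2 := by
    refine Asymptotics.IsBigO.of_bound (108 * k) (Eventually.of_forall fun y => ?_)
    have a1 := h.upper x y
    have a2 := h.upper y x
    have a3 := (h.D_lip hk).dist_le_mul y x
    rw [Real.coe_toNNReal _ (by positivity), dist_eq_norm, dist_eq_norm] at a3
    set D := (24 * k) • (x - P x)
    set D' := (24 * k) • (y - P y)
    have a4 : ⟪D', y - x⟫ - ⟪D, y - x⟫ = ⟪D' - D, y - x⟫ := by rw [inner_sub_left]
    have a5 := abs_real_inner_le_norm (D' - D) (y - x)
    have a6 : ⟪D', x - y⟫ = - ⟪D', y - x⟫ := by rw [← inner_neg_right]; congr 1; abel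
    have a7 : ‖x - y‖ = ‖y - x‖ := norm_sub_rev _ _
    rw [a6, a7] at a2
    have a8 : ‖D' - D‖ * ‖y - x‖ ≤ 96 * k * ‖y - x‖ ^ 2 := by
      have := norm_nonneg (y - x); nlinarith
    have a9 := abs_le.1 (a5.trans a8)
    rw [Real.norm_eq_abs, Real.norm_of_nonneg (by positivity), abs_le]
    have : 0 ≤ k * ‖y - x‖ ^ 2 := by positivity
    constructor <;> linarith [a9.1, a9.2]
  refine (this.trans_isLittleO ?_).congr_left (fun y => by simp [real_inner_smul_left, inner_sub_left])
  have := (Asymptotics.isLittleO_pow_id (𝕜 := ℝ) (n := 2) (by norm_num)).comp_tendsto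
    (show Tendsto (fun y : E => ‖y - x‖) (𝓝 x) (𝓝 0) by
      have : Continuous (fun y : E => ‖y - x‖) := by fun_prop
      simpa using this.tendsto x)
  exact Asymptotics.IsLittleO.of_norm_right (this.congr (fun _ => rfl) (fun _ => rfl))

theorem LL.semiconvex (h : LL k v g U P) (hk : 0 < k) (x d : E) :
    2 * U x - 8 * k * ‖d‖ ^ 2 ≤ U (x + d) + U (x - d) := by
  set e := (1 / 2 : ℝ) • (P (x + d) - P (x - d)) with he
  set m := (1 / 2 : ℝ) • (P (x + d) + P (x - d)) with hm
  have hp : P (x + d) = m + e := by rw [he, hm]; module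
  have hp' : P (x - d) = m - e := by rw [he, hm]; module
  have a1 := h.gmid m e
  have a2 := h.u1 x m
  rw [h.u2 (x + d), h.u2 (x - d), hp, hp']
  have e1 : ‖x + d - (m + e)‖ ^ 2 + ‖x - d - (m - e)‖ ^ 2 =
      2 * ‖x - m‖ ^ 2 + 2 * ‖d - e‖ ^ 2 := by
    rw [show x + d - (m + e) = (x - m) + (d - e) by abel,
      show x - d - (m - e) = (x - m) - (d - e) by abel,
      norm_add_sq_real, norm_sub_sq_real (x - m)]; ring
  have e2 : 6 * ‖e‖ ^ 2 ≤ 24 * ‖d - e‖ ^ 2 + 8 * ‖d‖ ^ 2 := by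
    rw [norm_sub_sq_real]
    have h3 : 0 ≤ ‖(4:ℝ) • d - (3:ℝ) • e‖ ^ 2 := by positivity
    rw [norm_sub_sq_real, inner_smul_left, inner_smul_right, norm_smul, norm_smul] at h3
    simp at h3
    nlinarith
  have e3 : 12 * k * (‖x + d - (m + e)‖ ^ 2 + ‖x - d - (m - e)‖ ^ 2) =
      12 * k * (2 * ‖x - m‖ ^ 2 + 2 * ‖d - e‖ ^ 2) := by rw [e1]
  nlinarith

theorem LL.lower (h : LL k v g U P) (hk : 0 < k) (x z : E) :
    v z - 4 * k * ‖x - z‖ ^ 2 ≤ U x := by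
  rw [h.u2]
  have h1 := h.g1 (P x) z
  have : 0 ≤ 12 * ‖x - P x‖ ^ 2 - 3 * ‖P x - z‖ ^ 2 + 4 * ‖x - z‖ ^ 2 := by
    set a := x - P x
    set b := x - z
    have e : P x - z = b - a := by simp [a, b]
    rw [e, norm_sub_sq_real b a]
    have h3 : 0 ≤ ‖(3:ℝ) • a + b‖ ^ 2 := by positivity
    rw [norm_add_sq_real, inner_smul_left, norm_smul, real_inner_comm] at h3
    simp at h3
    nlinarith
  nlinarith

end Conv

section Jensen
variable {E : Type*} [NormedAddCommGroup E] [InnerProductSpace ℝ E] [FiniteDimensional ℝ E]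

theorem taylor2 (U : E → ℝ) (D : E → E) (hU : ∀ x, HasGradientAt U (D x) x) (x : E)
    (X : E →L[ℝ] E) (hX : HasFDerivAt D X x) (ε : ℝ) (hε : 0 < ε) :
    ∀ᶠ h in 𝓝 (0:E), |U (x + h) - U x - ⟪D x, h⟫ - 1 / 2 * ⟪X h, h⟫| ≤ ε * ‖h‖ ^ 2 := by
  rw [hasFDerivAt_iff_isLittleO_nhds_zero, Asymptotics.isLittleO_iff] at hX
  obtain ⟨r, hr, hball⟩ := Metric.eventually_nhds_iff_ball.1 (hX hε)
  filter_upwards [Metric.ball_mem_nhds (0:E) hr] with h hh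
  have hder : ∀ s : ℝ, HasDerivAt
      (fun s : ℝ => U (x + s • h) - s * ⟪D x, h⟫ - 1 / 2 * s ^ 2 * ⟪X h, h⟫)
      (⟪D (x + s • h), h⟫ - ⟪D x, h⟫ - s * ⟪X h, h⟫) s := by
    intro s
    have h1 : HasDerivAt (fun s : ℝ => x + s • h) h s := by
      simpa using ((hasDerivAt_id s).smul_const h).const_add x
    have h2 := (hasGradientAt_iff_hasFDerivAt.1 (hU (x + s • h))).comp_hasDerivAt s h1
    have h3 : HasDerivAt (fun s : ℝ => s * ⟪D x, h⟫) ⟪D x, h⟫ s := by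
      simpa using (hasDerivAt_id s).mul_const ⟪D x, h⟫
    have h4 : HasDerivAt (fun s : ℝ => 1 / 2 * s ^ 2 * ⟪X h, h⟫) (s * ⟪X h, h⟫) s := by
      have := (((hasDerivAt_pow 2 s).const_mul (1 / 2 : ℝ)).mul_const ⟪X h, h⟫)
      refine this.congr_deriv ?_
      simp
    exact ((h2.sub h3).sub h4).congr_deriv (by simp)
  have := norm_image_sub_le_of_norm_deriv_le_segment_01' (C := ε * ‖h‖ ^ 2)
    (fun s _ => (hder s).hasDerivWithinAt) (by
      intro s hs
      have hs1 : ‖s • h‖ ≤ ‖h‖ := by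
        rw [norm_smul, Real.norm_of_nonneg hs.1]
        have := norm_nonneg h
        nlinarith [hs.2]
      have hb := hball (s • h) (by
        rw [mem_ball_zero_iff] at hh ⊢; linarith)
      have e : ⟪D (x + s • h), h⟫ - ⟪D x, h⟫ - s * ⟪X h, h⟫
          = ⟪D (x + s • h) - D x - X (s • h), h⟫ := by
        rw [inner_sub_left, inner_sub_left, map_smul, real_inner_smul_left]
      rw [e]
      refine (norm_inner_le_norm _ _).trans ?_
      calc _ ≤ (ε * ‖s • h‖) * ‖h‖ := by gcongr
        _ ≤ (ε * ‖h‖) * ‖h‖ := by gcongr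
        _ = _ := by ring)
  rw [Real.norm_eq_abs] at this
  convert this using 2
  simp
  ring

theorem quad_le_of_taylor (X : E →L[ℝ] E) (x h : E) (H : E → ℝ) (q : E) (a : ℝ)
    (hT : ∀ ε > 0, ∀ᶠ h in 𝓝 (0:E), H (x + h) - H x - ⟪q, h⟫ - 1 / 2 * ⟪X h, h⟫ ≥ - (ε * ‖h‖ ^ 2))
    (hH : ∀ᶠ s in 𝓝[>] (0:ℝ), H (x + s • h) - H x - ⟪q, s • h⟫ ≤ a * s ^ 2) :
    1 / 2 * ⟪X h, h⟫ ≤ a := by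
  refine le_of_forall_pos_le_add fun ε hε => ?_
  have hε' : 0 < ε / (‖h‖ ^ 2 + 1) := by positivity
  have ht : Tendsto (fun s : ℝ => s • h) (𝓝[>] 0) (𝓝 0) := by
    have : Continuous (fun s : ℝ => s • h) := by fun_prop
    have := this.tendsto 0
    rw [zero_smul] at this
    exact this.mono_left nhdsWithin_le_nhds
  obtain ⟨s, ⟨h1, h2⟩, hs⟩ :=
    (((ht.eventually (hT _ hε')).and hH).and self_mem_nhdsWithin).exists
  have hs : 0 < s := hs
  have e1 : ⟪X (s • h), s • h⟫ = s ^ 2 * ⟪X h, h⟫ := by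
    rw [map_smul, real_inner_smul_left, real_inner_smul_right]; ring
  have e2 : ε / (‖h‖ ^ 2 + 1) * ‖s • h‖ ^ 2 ≤ ε * s ^ 2 := by
    rw [norm_smul, Real.norm_of_nonneg hs.le, mul_pow, div_mul_eq_mul_div, div_le_iff₀ (by positivity)]
    nlinarith [mul_pos hε (pow_pos hs 2)]
  rw [e1] at h1
  have : s ^ 2 * (1 / 2 * ⟪X h, h⟫) ≤ s ^ 2 * (a + ε) := by linarith
  exact le_of_mul_le_mul_left this (by positivity)

open MeasureTheory in
theorem jensen (U₁ U₂ : E → ℝ) (D₁ D₂ : E → E) (h₁ : ∀ x, HasGradientAt U₁ (D₁ x) x)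
    (h₂ : ∀ x, HasGradientAt U₂ (D₂ x) x) (K : NNReal) (hL₁ : LipschitzWith K D₁)
    (hL₂ : LipschitzWith K D₂) (hle : ∀ x, U₁ x + U₂ x ≤ 0) (h0 : U₁ 0 + U₂ 0 = 0)
    (δ r : ℝ) (hδ : 0 < δ) (hr : 0 < r) :
    ∃ (x : E) (X₁ X₂ : E →L[ℝ] E), ‖x‖ < r ∧ HasFDerivAt D₁ X₁ x ∧ HasFDerivAt D₂ X₂ x ∧
      ∀ h, ⟪X₁ h, h⟫ + ⟪X₂ h, h⟫ ≤ δ * ‖h‖ ^ 2 := by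
  borelize E
  let μ : Measure E := Measure.hausdorffMeasure (Module.finrank ℝ E)
  let G : E → E := fun x => D₁ x + D₂ x - δ • x
  let A : Set E := {x | ‖x‖ < r ∧ ∀ y, U₁ y + U₂ y - δ / 2 * ‖y‖ ^ 2 - ⟪G x, y⟫
    ≤ U₁ x + U₂ x - δ / 2 * ‖x‖ ^ 2 - ⟪G x, x⟫}
  have hGlip : ∃ K', LipschitzWith K' G :=
    ⟨_, (hL₁.add hL₂).sub ((lipschitzWith_smul δ).comp LipschitzWith.id)⟩
  have hae : ∀ᵐ x ∂μ, DifferentiableAt ℝ D₁ x ∧ DifferentiableAt ℝ D₂ x := by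
    filter_upwards [hL₁.ae_differentiableAt (μ := μ), hL₂.ae_differentiableAt (μ := μ)] with x a b
      using ⟨a, b⟩
  have hc₁ : Continuous U₁ := continuous_iff_continuousAt.2 fun x =>
    (hasGradientAt_iff_hasFDerivAt.1 (h₁ x)).continuousAt
  have hc₂ : Continuous U₂ := continuous_iff_continuousAt.2 fun x =>
    (hasGradientAt_iff_hasFDerivAt.1 (h₂ x)).continuousAt
  have hsub : Metric.ball (0:E) (δ * r / 2) ⊆ G '' A := by
    intro q hq
    rw [mem_ball_zero_iff] at hq
    have hbound : ∀ y : E, ‖y‖ ≥ r → U₁ y + U₂ y - δ / 2 * ‖y‖ ^ 2 - ⟪q, y⟫ < 0 := by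
      intro y hy
      have e1 := hle y
      have e2 := neg_le_of_abs_le (abs_real_inner_le_norm q y)
      have e3 : ‖q‖ * ‖y‖ < δ / 2 * ‖y‖ ^ 2 := by
        have h5 : 0 < ‖y‖ := by linarith
        have h6 : ‖q‖ < δ / 2 * ‖y‖ := by nlinarith
        nlinarith
      linarith
    obtain ⟨x, hx, hmax⟩ := (isCompact_closedBall (0:E) r).exists_isMaxOn ⟨0, by simp [hr.le]⟩
      (f := fun y => U₁ y + U₂ y - δ / 2 * ‖y‖ ^ 2 - ⟪q, y⟫) (by fun_prop)
    have hx0 : 0 ≤ U₁ x + U₂ x - δ / 2 * ‖x‖ ^ 2 - ⟪q, x⟫ := by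
      have := hmax (by simp [hr.le] : (0:E) ∈ Metric.closedBall (0:E) r)
      simpa [h0] using this
    have hxr : ‖x‖ < r := by
      by_contra hcon
      have := hbound x (not_lt.1 hcon)
      linarith
    have hglob : ∀ y, U₁ y + U₂ y - δ / 2 * ‖y‖ ^ 2 - ⟪q, y⟫
        ≤ U₁ x + U₂ x - δ / 2 * ‖x‖ ^ 2 - ⟪q, x⟫ := by
      intro y
      by_cases hy : ‖y‖ < r
      · exact hmax (by simpa using hy.le : y ∈ Metric.closedBall (0:E) r)
      · have := hbound y (not_lt.1 hy); linarith
    have hGq : G x = q := by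
      have hd : HasFDerivAt (fun y => U₁ y + U₂ y - δ / 2 * ‖y‖ ^ 2 - ⟪q, y⟫)
          (InnerProductSpace.toDual ℝ E (G x - q)) x := by
        have e1 := (hasGradientAt_iff_hasFDerivAt.1 (h₁ x)).add
          (hasGradientAt_iff_hasFDerivAt.1 (h₂ x))
        have e2 := ((hasStrictFDerivAt_norm_sq x).hasFDerivAt).const_mul (δ / 2)
        have e3 : HasFDerivAt (fun y => ⟪q, y⟫) (innerSL ℝ q) x := (innerSL ℝ q).hasFDerivAt
        refine ((e1.sub e2).sub e3).congr_fderiv ?_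
        ext z
        simp [G]
        ring
      have := IsLocalMax.hasFDerivAt_eq_zero (Eventually.of_forall hglob) hd
      have h' : G x - q = 0 := (LinearIsometryEquiv.map_eq_zero_iff _).1 this
      exact sub_eq_zero.1 h'
    exact ⟨x, ⟨hxr, by rw [hGq]; exact hglob⟩, hGq⟩
  have hpos : μ A ≠ 0 := by
    intro hA
    obtain ⟨K', hK'⟩ := hGlip
    have h1 := hK'.hausdorffMeasure_image_le (d := (Module.finrank ℝ E : ℝ)) (by positivity) A
    have h2 : μ (G '' A) = 0 := by
      refine le_antisymm (h1.trans ?_) bot_le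
      change _ * μ A ≤ 0
      rw [hA, mul_zero]
    have h3 : μ (Metric.ball (0:E) (δ * r / 2)) = 0 := measure_mono_null hsub h2
    exact (Metric.measure_ball_pos μ (0:E) (by positivity)).ne' h3
  obtain ⟨x, hxA, hx₁, hx₂⟩ : ∃ x ∈ A, DifferentiableAt ℝ D₁ x ∧ DifferentiableAt ℝ D₂ x := by
    by_contra hcon
    push Not at hcon
    refine hpos (measure_mono_null ?_ (ae_iff.1 hae))
    intro x hx
    simp only [mem_ofPred_eq, not_and]
    exact hcon x hx
  refine ⟨x, _, _, hxA.1, hx₁.hasFDerivAt, hx₂.hasFDerivAt, fun h => ?_⟩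
  have := quad_le_of_taylor (fderiv ℝ D₁ x + fderiv ℝ D₂ x) x h (fun y => U₁ y + U₂ y)
    (D₁ x + D₂ x) (δ / 2 * ‖h‖ ^ 2) (by
      intro ε hε
      filter_upwards [taylor2 U₁ D₁ h₁ x _ hx₁.hasFDerivAt (ε / 2) (by positivity),
        taylor2 U₂ D₂ h₂ x _ hx₂.hasFDerivAt (ε / 2) (by positivity)] with z a b
      have a := (abs_le.1 a).1
      have b := (abs_le.1 b).1
      rw [add_apply, inner_add_left, inner_add_left]
      linarith) (by
      refine Eventually.of_forall fun s => ?_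
      have := hxA.2 (x + s • h)
      simp only [G] at this
      rw [inner_add_right, norm_add_sq_real, inner_sub_left _ _ (s • h), real_inner_smul_left x,
        norm_smul, mul_pow, Real.norm_eq_abs, sq_abs] at this
      have e : ⟪δ • x, s • h⟫ = δ * ⟪x, s • h⟫ := real_inner_smul_left _ _ _
      linarith)
  rw [add_apply, inner_add_left] at this
  linarith

end Jensen

section Key
variable {E : Type*} [NormedAddCommGroup E] [InnerProductSpace ℝ E] [FiniteDimensional ℝ E]
variable {k : ℝ} {v g U : E → ℝ} {P : E → E}

theorem LL.contact (h : LL k v g U P) (hk : 0 < k) (x : E) (X : E →L[ℝ] E)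
    (hX : HasFDerivAt (fun x => (24 * k) • (x - P x)) X x)
    (hub : ∀ e, ⟪X e, e⟫ ≤ 9 * k * ‖e‖ ^ 2) :
    ∃ z, U x = v z - 4 * k * ‖x - z‖ ^ 2 ∧ (24 * k) • (x - P x) = (8 * k) • (z - x) := by
  obtain ⟨z, hz⟩ := h.g2 (P x)
  set y := P x with hy
  set e : E := y - (1 / 4 : ℝ) • (y - z) - x with he
  have hs : ∀ s : ℝ, 0 ≤ s → s ≤ 1 → g y + 12 * k * ‖x + s • e - y‖ ^ 2 ≤ U (x + s • e) := by
    intro s hs0 hs1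
    rw [h.u2 (x + s • e)]
    set y' := P (x + s • e) with hy'
    have b1 := h.u1 x y'
    rw [h.u2 x, ← hy] at b1
    have b2 : g y + 12 * k * ‖x + e - y‖ ^ 2 ≤ g y' + 12 * k * ‖x + e - y'‖ ^ 2 := by
      have := h.g1 y' z
      rw [hz]
      set a := y - z with ha
      set b := y' - y with hb
      have c1 : x + e - y = - ((1 / 4 : ℝ) • a) := by rw [he]; module
      have c2 : x + e - y' = - ((1 / 4 : ℝ) • a + b) := by rw [he]; module
      have c3 : y' - z = a + b := by rw [ha, hb]; module
      rw [c1, c2, norm_neg, norm_neg, norm_add_sq_real, real_inner_smul_left]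
      rw [c3, norm_add_sq_real] at this
      have := mul_nonneg hk.le (sq_nonneg ‖b‖)
      linarith
    have id : ∀ u : E, ‖x + s • e - u‖ ^ 2 = (1 - s) * ‖x - u‖ ^ 2 + s * ‖x + e - u‖ ^ 2
        - s * (1 - s) * ‖e‖ ^ 2 := by
      intro u
      rw [show x + s • e - u = (x - u) + s • e by abel, show x + e - u = (x - u) + e by abel,
        norm_add_sq_real, norm_add_sq_real, real_inner_smul_right, norm_smul, mul_pow,
        Real.norm_eq_abs, sq_abs]
      ring
    rw [id y, id y']
    have d1 := mul_le_mul_of_nonneg_left b1 (sub_nonneg.2 hs1)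
    have d2 := mul_le_mul_of_nonneg_left b2 hs0
    nlinarith
  have hq := quad_le_of_taylor (-X) x e (fun y => - U y) (-((24 * k) • (x - P x)))
    (-(12 * k * ‖e‖ ^ 2)) (by
      intro ε hε
      filter_upwards [taylor2 U _ (h.hasGradientAt hk) x X hX ε hε] with z a
      have a := (abs_le.1 a).2
      rw [neg_apply, inner_neg_left, inner_neg_left]
      linarith) (by
      filter_upwards [Ioc_mem_nhdsGT (zero_lt_one (α := ℝ))] with s hs'
      have a := hs s hs'.1.le hs'.2
      have b := h.u2 x
      rw [← hy] at b ⊢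
      rw [show x + s • e - y = (x - y) + s • e by abel, norm_add_sq_real, norm_smul, mul_pow,
        Real.norm_eq_abs, sq_abs] at a
      rw [inner_neg_left, real_inner_smul_left]
      linarith)
  rw [neg_apply, inner_neg_left] at hq
  have he0 : ‖e‖ ^ 2 = 0 := by
    have := hub e
    have : k * ‖e‖ ^ 2 ≤ 0 := by
      have := mul_nonneg hk.le (sq_nonneg ‖e‖)
      linarith
    have h2 := sq_nonneg ‖e‖
    nlinarith
  have he1 : e = 0 := by simpa using he0
  have hx : x = y - (1 / 4 : ℝ) • (y - z) := by
    rw [he, sub_eq_zero] at he1; exact he1.symm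
  refine ⟨z, ?_, ?_⟩
  · rw [h.u2 x, ← hy, hz]
    have c1 : x - y = -((1 / 4 : ℝ) • (y - z)) := by rw [hx]; module
    have c2 : x - z = (3 / 4 : ℝ) • (y - z) := by rw [hx]; module
    rw [c1, c2, norm_neg, norm_smul, norm_smul, Real.norm_of_nonneg (by norm_num),
      Real.norm_of_nonneg (by norm_num)]
    ring
  · have c1 : x - y = (1 / 4 : ℝ) • (z - y) := by rw [hx]; module
    have c2 : z - x = (3 / 4 : ℝ) • (z - y) := by rw [hx]; module
    rw [c1, c2, smul_smul, smul_smul]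
    congr 1; ring

theorem LL.hess_lower (h : LL k v g U P) (hk : 0 < k) (x : E) (X : E →L[ℝ] E)
    (hX : HasFDerivAt (fun x => (24 * k) • (x - P x)) X x) (e : E) :
    - (8 * k * ‖e‖ ^ 2) ≤ ⟪X e, e⟫ := by
  have hT := taylor2 U _ (h.hasGradientAt hk) x X hX
  have hq := quad_le_of_taylor ((-2 : ℝ) • X) 0 e (fun y => - U (x + y) - U (x - y)) 0
    (8 * k * ‖e‖ ^ 2) (by
      intro ε hε
      have h1 := hT (ε / 2) (by positivity)
      have h2 : ∀ᶠ z in 𝓝 (0:E), |U (x + -z) - U x - ⟪(24 * k) • (x - P x), -z⟫ -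
          1 / 2 * ⟪X (-z), -z⟫| ≤ ε / 2 * ‖-z‖ ^ 2 := by
        have : Tendsto (fun z : E => -z) (𝓝 0) (𝓝 0) := by
          simpa using (continuous_neg (G := E)).tendsto 0
        exact this.eventually h1
      filter_upwards [h1, h2] with z a b
      have a := (abs_le.1 a).2
      have b := (abs_le.1 b).2
      rw [norm_neg, inner_neg_right, map_neg, inner_neg_neg, ← sub_eq_add_neg] at b
      rw [smul_apply, real_inner_smul_left]
      simp only [zero_add, add_zero, sub_zero, inner_zero_left]
      linarith) (by
      refine Eventually.of_forall fun s => ?_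
      have := h.semiconvex hk x (s • e)
      rw [norm_smul, mul_pow, Real.norm_eq_abs, sq_abs] at this
      simp only [zero_add, add_zero, sub_zero, inner_zero_left]
      linarith)
  rw [smul_apply, real_inner_smul_left] at hq
  linarith

theorem LL.test (h : LL k v g U P) (hk : 0 < k) (x : E) (X : E →L[ℝ] E)
    (hX : HasFDerivAt (fun x => (24 * k) • (x - P x)) X x)
    (hub : ∀ e, ⟪X e, e⟫ ≤ 9 * k * ‖e‖ ^ 2) (hP0 : P 0 = 0) :
    ∃ z, ‖z‖ ≤ 13 * ‖x‖ ∧ ∀ r > 0, ∀ᶠ d in 𝓝 (0:E),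
      v (z + d) ≤ v z + ⟪(24 * k) • (x - P x), d⟫ + 1 / 2 * ⟪X d, d⟫ + r * ‖d‖ ^ 2 := by
  obtain ⟨z, hz, hz2⟩ := h.contact hk x X hX hub
  refine ⟨z, ?_, ?_⟩
  · have h1 := (h.D_lip hk).dist_le_mul x 0
    simp only [hP0, sub_zero, smul_zero, dist_zero_right] at h1
    rw [Real.coe_toNNReal _ (by positivity), hz2, norm_smul, Real.norm_of_nonneg (by positivity)] at h1
    have h2 : ‖z - x‖ ≤ 12 * ‖x‖ := by
      have : k * ‖z - x‖ ≤ k * (12 * ‖x‖) := by linarith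
      exact le_of_mul_le_mul_left this hk
    have h3 : ‖z‖ ≤ ‖z - x‖ + ‖x‖ := by
      simpa using norm_add_le (z - x) x
    linarith
  · intro r hr
    filter_upwards [taylor2 U _ (h.hasGradientAt hk) x X hX r hr] with d a
    have a := (abs_le.1 a).2
    have b := h.lower hk (x + d) (z + d)
    rw [show x + d - (z + d) = x - z by abel] at b
    linarith

theorem key_lemma (k : ℝ) (hk : 0 < k) (v w : E → ℝ) (hv : Continuous v) (hw : Continuous w)
    (hv0 : v 0 = 0) (hw0 : w 0 = 0)
    (hvw : ∀ z z', v z - w z' ≤ 3 / 2 * k * ‖z - z'‖ ^ 2) (r : ℝ) (hr : 0 < r) :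
    ∃ (z z' p p' : E) (X Y : E →L[ℝ] E), ‖z‖ < r ∧ ‖z'‖ < r ∧ ‖p‖ < r ∧ ‖p'‖ < r ∧
      ‖Y‖ ≤ 96 * k ∧ (∀ e, ⟪X e, e⟫ - ⟪Y e, e⟫ ≤ r * ‖e‖ ^ 2) ∧
      (∀ᶠ d in 𝓝 (0:E), v (z + d) ≤ v z + ⟪p, d⟫ + 1 / 2 * ⟪X d, d⟫ + r * ‖d‖ ^ 2) ∧
      (∀ᶠ d in 𝓝 (0:E), w (z' + d) ≥ w z' + ⟪p', d⟫ + 1 / 2 * ⟪Y d, d⟫ - r * ‖d‖ ^ 2) := by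
  obtain ⟨g₁, U₁, P₁, L₁⟩ := exists_LL k hk v hv (fun z => by simpa [hw0] using hvw z 0)
  obtain ⟨g₂, U₂, P₂, L₂⟩ := exists_LL k hk (fun z => - w z) (by fun_prop)
    (fun z => by simpa [hv0] using hvw 0 z)
  have hle : ∀ x, U₁ x + U₂ x ≤ 0 := by
    intro x
    have a1 := L₁.u1 x x
    have a2 := L₂.u1 x x
    obtain ⟨z, hz⟩ := L₁.g2 x
    obtain ⟨z', hz'⟩ := L₂.g2 x
    have := hvw z z'
    simp only [sub_self, norm_zero] at a1 a2
    have e : ‖z - z'‖ ^ 2 ≤ 2 * ‖x - z‖ ^ 2 + 2 * ‖x - z'‖ ^ 2 := by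
      rw [show z - z' = (x - z') - (x - z) by abel]
      have := parallelogram_law_with_norm ℝ (x - z') (x - z)
      nlinarith [norm_nonneg (x - z' + (x - z))]
    nlinarith
  have b1 := L₁.lower hk 0 0
  have b2 := L₂.lower hk 0 0
  simp [hv0] at b1
  simp [hw0] at b2
  have hz1 : U₁ 0 = 0 := by linarith [hle 0]
  have hz2 : U₂ 0 = 0 := by linarith [hle 0]
  have hP1 : P₁ 0 = 0 := by
    have c1 := L₁.u2 0
    have c2 := L₁.g1 (P₁ 0) 0
    rw [hz1] at c1
    simp [hv0] at c1 c2
    have : k * ‖P₁ 0‖ ^ 2 ≤ 0 := by linarith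
    have : ‖P₁ 0‖ ^ 2 ≤ 0 := by nlinarith
    simpa using le_antisymm this (by positivity)
  have hP2 : P₂ 0 = 0 := by
    have c1 := L₂.u2 0
    have c2 := L₂.g1 (P₂ 0) 0
    rw [hz2] at c1
    simp [hw0] at c1 c2
    have : k * ‖P₂ 0‖ ^ 2 ≤ 0 := by linarith
    have : ‖P₂ 0‖ ^ 2 ≤ 0 := by nlinarith
    simpa using le_antisymm this (by positivity)
  obtain ⟨x, X₁, X₂, hx, hX₁, hX₂, hX⟩ := jensen U₁ U₂ _ _ (L₁.hasGradientAt hk)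
    (L₂.hasGradientAt hk) _ (L₁.D_lip hk) (L₂.D_lip hk) hle (by linarith) (min r k)
    (r / (96 * k + 13)) (lt_min hr hk) (by positivity)
  rw [lt_div_iff₀ (by positivity)] at hx
  have hx0 := norm_nonneg x
  have hkx := mul_nonneg hk.le hx0
  have hmin1 := min_le_left r k
  have hmin2 := min_le_right r k
  obtain ⟨z, hz, ht⟩ := L₁.test hk x X₁ hX₁ (fun e => by
    have a := hX e
    have b := L₂.hess_lower hk x X₂ hX₂ e
    nlinarith [sq_nonneg ‖e‖]) hP1
  obtain ⟨z', hz', ht'⟩ := L₂.test hk x X₂ hX₂ (fun e => by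
    have a := hX e
    have b := L₁.hess_lower hk x X₁ hX₁ e
    nlinarith [sq_nonneg ‖e‖]) hP2
  have hD1 := (L₁.D_lip hk).dist_le_mul x 0
  have hD2 := (L₂.D_lip hk).dist_le_mul x 0
  simp only [hP1, hP2, sub_zero, smul_zero, dist_zero_right] at hD1 hD2
  rw [Real.coe_toNNReal _ (by positivity)] at hD1 hD2
  refine ⟨z, z', (24 * k) • (x - P₁ x), -((24 * k) • (x - P₂ x)), X₁, -X₂, by linarith, by linarith,
    by linarith, by rw [norm_neg]; linarith, ?_, ?_, ht r hr, ?_⟩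
  · have := hX₂.le_of_lipschitz (L₂.D_lip hk)
    rwa [Real.coe_toNNReal _ (by positivity), ← norm_neg] at this
  · intro e
    rw [neg_apply, inner_neg_left]
    have := hX e
    nlinarith [sq_nonneg ‖e‖]
  · filter_upwards [ht' r hr] with d hd
    rw [neg_apply, inner_neg_left, inner_neg_left]
    linarith

end Key

section Test
variable {n : ℕ}

theorem trProj_eq (b : OrthonormalBasis (Fin n) ℝ (EuclideanSpace ℝ (Fin n))) (A : EuclideanSpace ℝ (Fin n) →L[ℝ] EuclideanSpace ℝ (Fin n)) (η : EuclideanSpace ℝ (Fin n)) :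
    trProj A η = (∑ i, ⟪A (b i), b i⟫) - ⟪A η, η⟫ := by
  unfold trProj clmTrace
  rw [LinearMap.trace_eq_sum_inner _ b]
  congr 1
  refine Finset.sum_congr rfl fun i _ => ?_
  rw [real_inner_comm]; rfl

theorem trProj_nonneg (A : EuclideanSpace ℝ (Fin n) →L[ℝ] EuclideanSpace ℝ (Fin n)) (a : EuclideanSpace ℝ (Fin n)) (ha : ‖a‖ = 1)
    (hA : ∀ e, 0 ≤ ⟪A e, e⟫) : 0 ≤ trProj A a := by
  have ho : Orthonormal ℝ ((↑) : ({a} : Set (EuclideanSpace ℝ (Fin n))) → EuclideanSpace ℝ (Fin n)) := by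
    refine ⟨fun i => ?_, fun i j hij => (hij (Subsingleton.elim _ _)).elim⟩
    obtain ⟨i, hi⟩ := i
    rw [mem_singleton_iff] at hi
    simpa [hi] using ha
  obtain ⟨u, b, hu, hb⟩ := ho.exists_orthonormalBasis_extension
  have hau : a ∈ u := by simpa using hu
  unfold trProj clmTrace
  rw [LinearMap.trace_eq_sum_inner _ b]
  have h1 : inner ℝ (b ⟨a, hau⟩) (A.toLinearMap (b ⟨a, hau⟩)) ≤
      ∑ i, inner ℝ (b i) (A.toLinearMap (b i)) := by
    refine Finset.single_le_sum (f := fun i => inner ℝ (b i) (A.toLinearMap (b i)))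
      (fun i _ => ?_) (Finset.mem_univ _)
    rw [real_inner_comm]
    exact hA _
  rw [hb] at h1
  have h2 : inner ℝ a (A.toLinearMap a) = ⟪A a, a⟫ := real_inner_comm _ _
  rw [hb]
  simp only at h1
  linarith

/-- the quadratic test function -/
noncomputable def quadT (p x₀ : EuclideanSpace ℝ (Fin n)) (X : EuclideanSpace ℝ (Fin n) →L[ℝ] EuclideanSpace ℝ (Fin n)) (r : ℝ) (x : EuclideanSpace ℝ (Fin n)) : ℝ :=
  ⟪p, x - x₀⟫ + 1 / 2 * ⟪X (x - x₀), x - x₀⟫ + r * ‖x - x₀‖ ^ 2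

theorem quadT_contDiff (p x₀ : EuclideanSpace ℝ (Fin n)) (X : EuclideanSpace ℝ (Fin n) →L[ℝ] EuclideanSpace ℝ (Fin n)) (r : ℝ) :
    ContDiff ℝ 2 (quadT p x₀ X r) := by
  unfold quadT
  have h : ContDiff ℝ 2 (fun x : EuclideanSpace ℝ (Fin n) => x - x₀) := by fun_prop
  exact ((contDiff_const.inner ℝ h).add
    (contDiff_const.mul ((X.contDiff.comp h).inner ℝ h))).add (contDiff_const.mul (h.norm_sq ℝ))

theorem quadT_gradient (p x₀ : EuclideanSpace ℝ (Fin n)) (X : EuclideanSpace ℝ (Fin n) →L[ℝ] EuclideanSpace ℝ (Fin n)) (r : ℝ) (x : EuclideanSpace ℝ (Fin n)) :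
    gradient (quadT p x₀ X r) x =
      p + ((1 / 2 : ℝ) • (X + X.adjoint) + (2 * r) • ContinuousLinearMap.id ℝ (EuclideanSpace ℝ (Fin n))) (x - x₀) := by
  refine HasGradientAt.gradient ?_
  rw [hasGradientAt_iff_hasFDerivAt]
  unfold quadT
  have h : HasFDerivAt (fun x : EuclideanSpace ℝ (Fin n) => x - x₀) (ContinuousLinearMap.id ℝ (EuclideanSpace ℝ (Fin n))) x :=
    (hasFDerivAt_id x).sub_const x₀
  have h1 := ((hasFDerivAt_const p x).inner ℝ h)
  have h2 := ((X.hasFDerivAt.comp x h).inner ℝ h).const_mul (1 / 2 : ℝ)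
  have h3 := (h.norm_sq).const_mul r
  refine ((h1.add h2).add h3).congr_fderiv ?_
  ext z
  simp [ContinuousLinearMap.adjoint_inner_left, fderivInnerCLM_apply]
  rw [real_inner_comm (x - x₀) (X z)]
  simp only [inner_sub_left]
  ring

theorem quadT_hess (p x₀ : EuclideanSpace ℝ (Fin n)) (X : EuclideanSpace ℝ (Fin n) →L[ℝ] EuclideanSpace ℝ (Fin n)) (r : ℝ) (x : EuclideanSpace ℝ (Fin n)) :
    hess (quadT p x₀ X r) x =
      ((1 / 2 : ℝ) • (X + X.adjoint) + (2 * r) • ContinuousLinearMap.id ℝ (EuclideanSpace ℝ (Fin n))) := by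
  unfold hess
  rw [show gradient (quadT p x₀ X r) = _ from funext (quadT_gradient p x₀ X r)]
  refine HasFDerivAt.fderiv ?_
  have h : HasFDerivAt (fun x : EuclideanSpace ℝ (Fin n) => x - x₀) (ContinuousLinearMap.id ℝ (EuclideanSpace ℝ (Fin n))) x :=
    (hasFDerivAt_id x).sub_const x₀
  exact ((ContinuousLinearMap.hasFDerivAt _).comp x h).const_add p

theorem quadT_trProj (p x₀ : EuclideanSpace ℝ (Fin n)) (X : EuclideanSpace ℝ (Fin n) →L[ℝ] EuclideanSpace ℝ (Fin n)) (r : ℝ) (x η : EuclideanSpace ℝ (Fin n)) :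
    trProj (hess (quadT p x₀ X r) x) η = trProj X η + 2 * r * (n - ‖η‖ ^ 2) := by
  rw [quadT_hess]
  have hq : ∀ e : EuclideanSpace ℝ (Fin n), ⟪((1 / 2 : ℝ) • (X + X.adjoint) +
      (2 * r) • ContinuousLinearMap.id ℝ (EuclideanSpace ℝ (Fin n))) e, e⟫ = ⟪X e, e⟫ + 2 * r * ‖e‖ ^ 2 := by
    intro e
    simp [inner_add_left, real_inner_smul_left, ContinuousLinearMap.adjoint_inner_left]
    rw [real_inner_comm]
    ring
  let b := EuclideanSpace.basisFun (Fin n) ℝ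
  rw [trProj_eq b, trProj_eq b, hq]
  simp only [hq, Finset.sum_add_distrib]
  simp
  ring

theorem sub_test {g v : EuclideanSpace ℝ (Fin n) → ℝ} (hv : StatSubsol g Set.univ v) (p x₀ : EuclideanSpace ℝ (Fin n))
    (X : EuclideanSpace ℝ (Fin n) →L[ℝ] EuclideanSpace ℝ (Fin n)) (r : ℝ)
    (h : ∀ᶠ d in 𝓝 (0 : EuclideanSpace ℝ (Fin n)), v (x₀ + d) ≤ v x₀ + ⟪p, d⟫ + 1 / 2 * ⟪X d, d⟫ + r * ‖d‖ ^ 2) :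
    (p ≠ 0 → -(trProj X (‖p‖⁻¹ • p) + 2 * r * (n - 1) + ‖p‖) ≤ g x₀) ∧
    (p = 0 → ∃ η : EuclideanSpace ℝ (Fin n), ‖η‖ ≤ 1 ∧ -(trProj X η + 2 * r * (n - ‖η‖ ^ 2)) ≤ g x₀) := by
  have hmax : IsLocalMax (fun x => v x - quadT p x₀ X r x) x₀ := by
    have ht : Tendsto (fun x : EuclideanSpace ℝ (Fin n) => x - x₀) (𝓝 x₀) (𝓝 0) := by
      have : Continuous (fun x : EuclideanSpace ℝ (Fin n) => x - x₀) := by fun_prop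
      simpa using this.tendsto x₀
    filter_upwards [ht.eventually h] with x hx
    rw [add_sub_cancel] at hx
    simp only [quadT, sub_self, map_zero, inner_zero_right, norm_zero]
    linarith
  have := hv _ (quadT_contDiff p x₀ X r) x₀ (mem_univ _) hmax
  have hg : gradient (quadT p x₀ X r) x₀ = p := by rw [quadT_gradient]; simp
  simp only [hg, quadT_trProj] at this
  refine ⟨fun hp => ?_, this.2⟩
  have h1 := this.1 hp
  have h2 : ‖‖p‖⁻¹ • p‖ = 1 := by
    rw [norm_smul, norm_inv, norm_norm, inv_mul_cancel₀ (norm_ne_zero_iff.2 hp)]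
  rwa [h2, one_pow] at h1

theorem super_test {g v : EuclideanSpace ℝ (Fin n) → ℝ} (hv : StatSupersol g Set.univ v) (p x₀ : EuclideanSpace ℝ (Fin n))
    (X : EuclideanSpace ℝ (Fin n) →L[ℝ] EuclideanSpace ℝ (Fin n)) (r : ℝ)
    (h : ∀ᶠ d in 𝓝 (0 : EuclideanSpace ℝ (Fin n)), v (x₀ + d) ≥ v x₀ + ⟪p, d⟫ + 1 / 2 * ⟪X d, d⟫ - r * ‖d‖ ^ 2)
    (hp : p ≠ 0) : -(trProj X (‖p‖⁻¹ • p) - 2 * r * (n - 1) + ‖p‖) ≥ g x₀ := by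
  have hmax : IsLocalMin (fun x => v x - quadT p x₀ X (-r) x) x₀ := by
    have ht : Tendsto (fun x : EuclideanSpace ℝ (Fin n) => x - x₀) (𝓝 x₀) (𝓝 0) := by
      have : Continuous (fun x : EuclideanSpace ℝ (Fin n) => x - x₀) := by fun_prop
      simpa using this.tendsto x₀
    filter_upwards [ht.eventually h] with x hx
    rw [add_sub_cancel] at hx
    simp only [quadT, sub_self, map_zero, inner_zero_right, norm_zero]
    linarith
  have := hv _ (quadT_contDiff p x₀ X (-r)) x₀ (mem_univ _) hmax
  have hg : gradient (quadT p x₀ X (-r)) x₀ = p := by rw [quadT_gradient]; simp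
  simp only [hg, quadT_trProj] at this
  have h1 := this.1 hp
  have h2 : ‖‖p‖⁻¹ • p‖ = 1 := by
    rw [norm_smul, norm_inv, norm_norm, inv_mul_cancel₀ (norm_ne_zero_iff.2 hp)]
  rw [h2, one_pow] at h1
  linarith

theorem StatSubsol.smul {g v : EuclideanSpace ℝ (Fin n) → ℝ} (hv : StatSubsol g Set.univ v) (l : ℝ) (hl : 0 < l)
    (p x₀ : EuclideanSpace ℝ (Fin n)) (X : EuclideanSpace ℝ (Fin n) →L[ℝ] EuclideanSpace ℝ (Fin n)) (r : ℝ)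
    (h : ∀ᶠ d in 𝓝 (0 : EuclideanSpace ℝ (Fin n)),
      l * v (x₀ + d) ≤ l * v x₀ + ⟪p, d⟫ + 1 / 2 * ⟪X d, d⟫ + r * ‖d‖ ^ 2) (hp : p ≠ 0) :
    -(trProj X (‖p‖⁻¹ • p) + 2 * r * (n - 1) + ‖p‖) ≤ l * g x₀ := by
  have h1 := (sub_test hv (l⁻¹ • p) x₀ (l⁻¹ • X) (l⁻¹ * r) (by
    filter_upwards [h] with d hd
    rw [smul_apply, real_inner_smul_left, real_inner_smul_left]
    have := mul_le_mul_of_nonneg_left hd (inv_nonneg.2 hl.le)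
    rw [inv_mul_cancel_left₀ hl.ne'] at this
    refine this.trans (le_of_eq ?_)
    field_simp)).1 (smul_ne_zero (inv_ne_zero hl.ne') hp)
  have e1 : ‖l⁻¹ • p‖ = l⁻¹ * ‖p‖ := by
    rw [norm_smul, Real.norm_of_nonneg (inv_nonneg.2 hl.le)]
  have e2 : ‖l⁻¹ • p‖⁻¹ • l⁻¹ • p = ‖p‖⁻¹ • p := by
    rw [e1, smul_smul]; congr 1; field_simp
  have e3 : ∀ η, trProj (l⁻¹ • X) η = l⁻¹ * trProj X η := by
    intro η
    let b := EuclideanSpace.basisFun (Fin n) ℝ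
    rw [trProj_eq b, trProj_eq b, mul_sub, Finset.mul_sum]
    simp only [smul_apply, real_inner_smul_left]
  rw [e2, e1, e3] at h1
  have := mul_le_mul_of_nonneg_left h1 hl.le
  refine le_trans (le_of_eq ?_) this
  field_simp

end Test

section Core

/-- the penalization -/
noncomputable def psi {E : Type*} [NormedAddCommGroup E] (h : E) : ℝ :=
  ‖h‖ ^ 2 - 1 + 1 / (1 + ‖h‖ ^ 2)

theorem psi_eq {E : Type*} [NormedAddCommGroup E] (h : E) :
    psi h = (‖h‖ ^ 2) ^ 2 / (1 + ‖h‖ ^ 2) := by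
  unfold psi; field_simp; ring

theorem psi_nonneg {E : Type*} [NormedAddCommGroup E] (h : E) : 0 ≤ psi h := by
  rw [psi_eq]; positivity

theorem psi_zero {E : Type*} [NormedAddCommGroup E] : psi (0 : E) = 0 := by
  simp [psi_eq]

theorem psi_eq_zero {E : Type*} [NormedAddCommGroup E] (h : E) (hh : psi h = 0) : h = 0 := by
  rw [psi_eq, div_eq_zero_iff] at hh
  rcases hh with hh | hh
  · simpa using hh
  · have := sq_nonneg ‖h‖; linarith

theorem psi_le {E : Type*} [NormedAddCommGroup E] (h : E) : psi h ≤ (‖h‖ ^ 2) ^ 2 := by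
  rw [psi_eq]; exact div_le_self (by positivity) (by nlinarith [sq_nonneg ‖h‖])

theorem psi_ge {E : Type*} [NormedAddCommGroup E] (h : E) : ‖h‖ ^ 2 - 1 ≤ psi h := by
  unfold psi
  have : 0 ≤ 1 / (1 + ‖h‖ ^ 2) := by positivity
  linarith

theorem psi_cont {E : Type*} [NormedAddCommGroup E] : Continuous (psi : E → ℝ) := by
  unfold psi
  have h : ∀ x : E, 1 + ‖x‖ ^ 2 ≠ 0 := fun x => by positivity
  fun_prop (disch := assumption)

theorem psi_upper {E : Type*} [NormedAddCommGroup E] [InnerProductSpace ℝ E] (ξ h : E) :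
    psi (ξ + h) ≤ psi ξ + ⟪(2 * (1 - 1 / (1 + ‖ξ‖ ^ 2) ^ 2)) • ξ, h⟫ + 3 * ‖h‖ ^ 2 := by
  unfold psi
  rw [real_inner_smul_left]
  have e := norm_add_sq_real ξ h
  set s := ‖ξ‖ ^ 2 with hs
  set s' := ‖ξ + h‖ ^ 2 with hs'
  have s0 : 0 ≤ s := by positivity
  have s0' : 0 ≤ s' := by positivity
  have h1 : (s' - s) ^ 2 ≤ 2 * ‖h‖ ^ 2 * ((1 + s) * (1 + s')) := by
    have a1 : |‖ξ + h‖ - ‖ξ‖| ≤ ‖h‖ := by simpa using abs_norm_sub_norm_le (ξ + h) ξ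
    have a2 : (‖ξ + h‖ - ‖ξ‖) ^ 2 ≤ ‖h‖ ^ 2 := sq_le_sq' (by linarith [(abs_le.1 a1).1]) (abs_le.1 a1).2
    have a3 : (‖ξ + h‖ + ‖ξ‖) ^ 2 ≤ 2 * ((1 + s) * (1 + s')) := by
      nlinarith [sq_nonneg (‖ξ + h‖ - ‖ξ‖), mul_nonneg s0 s0']
    calc (s' - s) ^ 2 = (‖ξ + h‖ - ‖ξ‖) ^ 2 * (‖ξ + h‖ + ‖ξ‖) ^ 2 := by rw [hs, hs']; ring
      _ ≤ ‖h‖ ^ 2 * (2 * ((1 + s) * (1 + s'))) := by gcongr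
      _ = _ := by ring
  have h2 : 1 / (1 + s') - 1 / (1 + s) + (s' - s) / (1 + s) ^ 2
      = (s' - s) ^ 2 / ((1 + s) ^ 2 * (1 + s')) := by
    field_simp; ring
  have h3 : (s' - s) ^ 2 / ((1 + s) ^ 2 * (1 + s')) ≤ 2 * ‖h‖ ^ 2 := by
    rw [div_le_iff₀ (by positivity)]
    refine h1.trans ?_
    have : 0 ≤ ‖h‖ ^ 2 * (s * ((1 + s) * (1 + s'))) := by positivity
    nlinarith
  have h4 : ⟪ξ, h⟫ = (s' - s - ‖h‖ ^ 2) / 2 := by linarith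
  have h5 : 0 ≤ 1 / (1 + s) ^ 2 := by positivity
  have h6 : (s' - s) / (1 + s) ^ 2 = (s' - s) * (1 / (1 + s) ^ 2) := by ring
  rw [h4]
  rw [h6] at h2
  have h7 : 0 ≤ 1 / (1 + s) ^ 2 * ‖h‖ ^ 2 := by positivity
  nlinarith

variable {n : ℕ}

theorem trProj_le (X Y : EuclideanSpace ℝ (Fin n) →L[ℝ] EuclideanSpace ℝ (Fin n)) (r : ℝ)
    (h : ∀ e, ⟪X e, e⟫ - ⟪Y e, e⟫ ≤ r * ‖e‖ ^ 2) (a : EuclideanSpace ℝ (Fin n)) (ha : ‖a‖ = 1) :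
    trProj X a ≤ trProj Y a + r * (n - 1) := by
  have hq : ∀ e, ⟪(r • ContinuousLinearMap.id ℝ (EuclideanSpace ℝ (Fin n)) - (X - Y)) e, e⟫ =
      r * ‖e‖ ^ 2 - (⟪X e, e⟫ - ⟪Y e, e⟫) := by
    intro e
    rw [sub_apply, sub_apply, smul_apply, inner_sub_left, inner_sub_left, real_inner_smul_left]
    simp
  have := trProj_nonneg (r • ContinuousLinearMap.id ℝ _ - (X - Y)) a ha
    (fun e => by rw [hq]; linarith [h e])
  let b := EuclideanSpace.basisFun (Fin n) ℝ
  rw [trProj_eq b] at this ⊢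
  rw [trProj_eq b]
  simp only [hq, Finset.sum_sub_distrib, ha] at this
  simp at this
  linarith

theorem normalize_dist {E : Type*} [NormedAddCommGroup E] [InnerProductSpace ℝ E] (P Q : E)
    (hP : P ≠ 0) (hQ : Q ≠ 0) : ‖P‖ * ‖‖P‖⁻¹ • P - ‖Q‖⁻¹ • Q‖ ≤ 2 * ‖P - Q‖ := by
  have hP' := norm_ne_zero_iff.2 hP
  have hQ' := norm_ne_zero_iff.2 hQ
  have e : ‖P‖ • (‖P‖⁻¹ • P - ‖Q‖⁻¹ • Q) = (P - Q) + (‖Q‖ - ‖P‖) • (‖Q‖⁻¹ • Q) := by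
    rw [smul_sub, smul_smul, mul_inv_cancel₀ hP', one_smul, sub_smul, smul_smul ‖Q‖,
      mul_inv_cancel₀ hQ', one_smul]
    abel
  have e2 : ‖‖Q‖⁻¹ • Q‖ = 1 := by
    rw [norm_smul, norm_inv, norm_norm, inv_mul_cancel₀ hQ']
  calc _ = ‖‖P‖ • (‖P‖⁻¹ • P - ‖Q‖⁻¹ • Q)‖ := by rw [norm_smul, norm_norm]
    _ ≤ ‖P - Q‖ + ‖(‖Q‖ - ‖P‖) • (‖Q‖⁻¹ • Q)‖ := by rw [e]; exact norm_add_le _ _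
    _ ≤ ‖P - Q‖ + ‖P - Q‖ := by
      gcongr
      rw [norm_smul, e2, mul_one, norm_sub_rev P Q, Real.norm_eq_abs]
      exact abs_norm_sub_norm_le _ _
    _ = _ := by ring

theorem core (hn : 2 ≤ n) (g v w : EuclideanSpace ℝ (Fin n) → ℝ) (hg : Continuous g)
    (hvc : Continuous v) (hwc : Continuous w)
    (hv : StatSubsol g Set.univ v) (hw : StatSupersol g Set.univ w) (l α : ℝ) (hl : 0 < l)
    (hα : 0 < α) (x₀ y₀ : EuclideanSpace ℝ (Fin n))
    (hmax : ∀ x y, l * v x - w y - α * psi (x - y) ≤ l * v x₀ - w y₀ - α * psi (x₀ - y₀))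
    (hgx : g x₀ < 0) (hgl : l * g x₀ < g y₀) : False := by
  have hn' : (2:ℝ) ≤ n := by exact_mod_cast hn
  by_cases hξ : x₀ = y₀
  · subst hξ
    set r : ℝ := -g x₀ / (2 * n + 2) with hr
    have hr0 : 0 < r := by
      rw [hr]; apply div_pos <;> linarith
    have hr1 : r * (2 * n + 2) = -g x₀ := by rw [hr]; field_simp
    obtain ⟨η, -, h2⟩ := (sub_test hv 0 x₀ 0 r (by
      have hc : Tendsto (fun d : EuclideanSpace ℝ (Fin n) => α * ‖d‖ ^ 2) (𝓝 0) (𝓝 0) := by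
        have : Continuous (fun d : EuclideanSpace ℝ (Fin n) => α * ‖d‖ ^ 2) := by fun_prop
        simpa using this.tendsto 0
      filter_upwards [hc.eventually (gt_mem_nhds (mul_pos hl hr0))] with d hd
      have a := hmax (x₀ + d) x₀
      rw [add_sub_cancel_left, sub_self, psi_zero] at a
      have b := psi_le d
      have c : l * v (x₀ + d) ≤ l * (v x₀ + r * ‖d‖ ^ 2) := by
        have := mul_le_mul_of_nonneg_right hd.le (sq_nonneg ‖d‖)
        have := mul_le_mul_of_nonneg_left b hα.le
        nlinarith
      have := le_of_mul_le_mul_left c hl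
      simpa using this)).2 rfl
    have h3 : trProj (0 : EuclideanSpace ℝ (Fin n) →L[ℝ] EuclideanSpace ℝ (Fin n)) η = 0 := by
      simp [trProj, clmTrace]
    rw [h3] at h2
    nlinarith [mul_nonneg hr0.le (sq_nonneg ‖η‖)]
  · set ξ := x₀ - y₀ with hξd
    have hξ0 : ξ ≠ 0 := sub_ne_zero.2 hξ
    set p₀ := α • (2 * (1 - 1 / (1 + ‖ξ‖ ^ 2) ^ 2)) • ξ with hp₀
    have hp0 : p₀ ≠ 0 := by
      refine smul_ne_zero hα.ne' (smul_ne_zero ?_ hξ0)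
      have h1 : 0 < ‖ξ‖ ^ 2 := by
        have := norm_pos_iff.2 hξ0; positivity
      have h2 : 1 / (1 + ‖ξ‖ ^ 2) ^ 2 < 1 := by
        rw [div_lt_one (by positivity)]; nlinarith
      linarith
    have hp0' : 0 < ‖p₀‖ := norm_pos_iff.2 hp0
    set γ := g y₀ - l * g x₀ with hγ
    have hγ0 : 0 < γ := by linarith
    obtain ⟨ρ₁, hρ₁, hb₁⟩ : ∃ ρ > 0, ∀ z, ‖z‖ < ρ → l * g (x₀ + z) < l * g x₀ + γ / 4 := by
      have : Continuous (fun z => l * g (x₀ + z)) := by fun_prop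
      have := this.tendsto 0
      rw [add_zero] at this
      obtain ⟨ρ, h1, h2⟩ := Metric.eventually_nhds_iff_ball.1
        (this.eventually (gt_mem_nhds (show l * g x₀ < l * g x₀ + γ / 4 by linarith)))
      exact ⟨ρ, h1, fun z hz => h2 z (by simpa using hz)⟩
    obtain ⟨ρ₂, hρ₂, hb₂⟩ : ∃ ρ > 0, ∀ z, ‖z‖ < ρ → g y₀ - γ / 4 < g (y₀ + z) := by
      have : Continuous (fun z => g (y₀ + z)) := by fun_prop
      have := this.tendsto 0
      rw [add_zero] at this
      obtain ⟨ρ, h1, h2⟩ := Metric.eventually_nhds_iff_ball.1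
        (this.eventually (lt_mem_nhds (show g y₀ - γ / 4 < g y₀ by linarith)))
      exact ⟨ρ, h1, fun z hz => h2 z (by simpa using hz)⟩
    set M : ℝ := 5 * n + 2 + 3072 * α / ‖p₀‖ with hM
    have hM0 : 0 < M := by positivity
    obtain ⟨r, hr, hr1, hr2, hr3, hr4⟩ : ∃ r > 0, r ≤ ρ₁ ∧ r ≤ ρ₂ ∧ r ≤ ‖p₀‖ / 2 ∧
        r * M ≤ γ / 2 := by
      refine ⟨min (min ρ₁ ρ₂) (min (‖p₀‖ / 2) (γ / 2 / M)), by positivity, ?_, ?_, ?_, ?_⟩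
      · exact (min_le_left _ _).trans (min_le_left _ _)
      · exact (min_le_left _ _).trans (min_le_right _ _)
      · exact (min_le_right _ _).trans (min_le_left _ _)
      · rw [← le_div_iff₀ hM0]; exact (min_le_right _ _).trans (min_le_right _ _)
    obtain ⟨z, z', p, p', X, Y, hz, hz', hp, hp', hY, hXY, ht, ht'⟩ :=
      key_lemma (2 * α) (by positivity)
        (fun z => l * v (x₀ + z) - l * v x₀ - ⟪p₀, z⟫) (fun z => w (y₀ + z) - w y₀ - ⟪p₀, z⟫)
        (by fun_prop) (by fun_prop) (by simp) (by simp) (by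
          intro z z'
          have a := hmax (x₀ + z) (y₀ + z')
          have b := psi_upper ξ (z - z')
          have c := mul_le_mul_of_nonneg_left b hα.le
          rw [show x₀ + z - (y₀ + z') = ξ + (z - z') by rw [hξd]; abel] at a
          have d : ⟪p₀, z⟫ - ⟪p₀, z'⟫ =
              α * ⟪(2 * (1 - 1 / (1 + ‖ξ‖ ^ 2) ^ 2)) • ξ, z - z'⟫ := by
            rw [← inner_sub_right, hp₀, real_inner_smul_left]
          linarith) r hr
    have hP : ‖p₀‖ / 2 < ‖p₀ + p‖ := by
      have : ‖p₀‖ ≤ ‖p₀ + p‖ + ‖p‖ := by simpa using norm_sub_le (p₀ + p) p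
      linarith
    have hQ : ‖p₀‖ / 2 < ‖p₀ + p'‖ := by
      have : ‖p₀‖ ≤ ‖p₀ + p'‖ + ‖p'‖ := by simpa using norm_sub_le (p₀ + p') p'
      linarith
    have hP0 : p₀ + p ≠ 0 := norm_pos_iff.1 (by linarith)
    have hQ0 : p₀ + p' ≠ 0 := norm_pos_iff.1 (by linarith)
    have s1 := hv.smul l hl (p₀ + p) (x₀ + z) X r (by
      filter_upwards [ht] with d hd
      rw [← add_assoc] at hd
      rw [inner_add_left]
      rw [inner_add_right] at hd
      linarith) hP0
    have s2 := super_test hw (p₀ + p') (y₀ + z') Y r (by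
      filter_upwards [ht'] with d hd
      rw [← add_assoc] at hd
      rw [inner_add_left]
      rw [inner_add_right] at hd
      linarith) hQ0
    set P := p₀ + p with hPd
    set Q := p₀ + p' with hQd
    set a := ‖P‖⁻¹ • P with ha
    set b := ‖Q‖⁻¹ • Q with hb
    have ha1 : ‖a‖ = 1 := by
      rw [ha, norm_smul, norm_inv, norm_norm, inv_mul_cancel₀ (norm_ne_zero_iff.2 hP0)]
    have hb1 : ‖b‖ = 1 := by
      rw [hb, norm_smul, norm_inv, norm_norm, inv_mul_cancel₀ (norm_ne_zero_iff.2 hQ0)]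
    have hPQ : ‖P - Q‖ ≤ 2 * r := by
      rw [hPd, hQd, add_sub_add_left_eq_sub]
      exact (norm_sub_le _ _).trans (by linarith)
    have hab : ‖a - b‖ ≤ 8 * r / ‖p₀‖ := by
      have h1 := normalize_dist P Q hP0 hQ0
      rw [le_div_iff₀ hp0']
      have h2 := norm_nonneg (a - b)
      nlinarith
    have t1 := trProj_le X Y r hXY a ha1
    have t2 : trProj Y a ≤ trProj Y b + 3072 * α / ‖p₀‖ * r := by
      have e1 : trProj Y a - trProj Y b = ⟪Y (b - a), b⟫ + ⟪Y a, b - a⟫ := by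
        unfold trProj
        rw [map_sub, inner_sub_left, inner_sub_right]; ring
      have e2 : ⟪Y (b - a), b⟫ ≤ 96 * (2 * α) * ‖a - b‖ := by
        refine (real_inner_le_norm _ _).trans ?_
        rw [hb1, mul_one, norm_sub_rev a b]
        exact (Y.le_opNorm _).trans (by gcongr)
      have e3 : ⟪Y a, b - a⟫ ≤ 96 * (2 * α) * ‖a - b‖ := by
        refine (real_inner_le_norm _ _).trans ?_
        rw [norm_sub_rev a b]
        gcongr
        have := Y.le_opNorm a
        rw [ha1, mul_one] at this
        exact this.trans hY
      have e4 : 96 * (2 * α) * ‖a - b‖ ≤ 96 * (2 * α) * (8 * r / ‖p₀‖) := by gcongr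
      have e5 : 96 * (2 * α) * (8 * r / ‖p₀‖) + 96 * (2 * α) * (8 * r / ‖p₀‖)
          = 3072 * α / ‖p₀‖ * r := by field_simp; ring
      linarith
    have t3 : ‖P‖ - ‖Q‖ ≤ 2 * r := (norm_sub_norm_le P Q).trans hPQ
    have u1 := hb₁ z (by linarith)
    have u2 := hb₂ z' (by linarith)
    have hrM : r * M = 5 * (r * n) + 2 * r + 3072 * α / ‖p₀‖ * r := by rw [hM]; ring
    nlinarith

end Core

theorem log_growth (a θ : ℝ) (ha : 0 < a) (hθ : 0 < θ) :
    ∃ M, ∀ t : ℝ, 0 ≤ t → a * Real.log (t + 1) ≤ θ * t + M := by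
  refine ⟨θ - a - a * Real.log (θ / a), fun t ht => ?_⟩
  have h1 : 0 < θ / a := div_pos hθ ha
  have h2 : Real.log (θ / a * (t + 1)) ≤ θ / a * (t + 1) - 1 :=
    Real.log_le_sub_one_of_pos (by positivity)
  rw [Real.log_mul h1.ne' (by positivity)] at h2
  have h3 := mul_le_mul_of_nonneg_left h2 ha.le
  have h4 : a * (θ / a * (t + 1) - 1) = θ * (t + 1) - a := by field_simp
  rw [h4] at h3
  linarith

theorem bounded_aux {n : ℕ} (hn : 2 ≤ n) (v w : EuclideanSpace ℝ (Fin n) → ℝ)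
    (c C l : ℝ) (hc : 0 < c) (hl : 1 < l)
    (hv : ∀ x, v x ≤ -c * ‖x‖ + C)
    (hw : ∀ x, -c * ‖x‖ - c * ((n : ℝ) - 1) * Real.log (‖x‖ + 1) - C ≤ w x) :
    ∃ R, ∀ x y, 0 ≤ l * v x - w y - psi (x - y) → ‖x‖ ≤ R ∧ ‖y‖ ≤ R := by
  have hn' : (2 : ℝ) ≤ n := by exact_mod_cast hn
  have hθ : 0 < (l - 1) * c / 2 := by have : 0 < l - 1 := by linarith
                                      positivity
  obtain ⟨θ, hθe⟩ : ∃ θ, θ = (l - 1) * c / 2 := ⟨_, rfl⟩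
  rw [← hθe] at hθ
  obtain ⟨M, hM⟩ := log_growth (c * ((n : ℝ) - 1)) θ (mul_pos hc (by linarith)) hθ
  obtain ⟨K, hK⟩ : ∃ K, K = l * C + M + C + 1 + (c + θ + 1) ^ 2 / 4 := ⟨_, rfl⟩
  have key : ∀ x y, 0 ≤ l * v x - w y - psi (x - y) → θ * ‖x‖ + ‖x - y‖ ≤ K := by
    intro x y h
    have h1 := mul_le_mul_of_nonneg_left (hv x) (by linarith : 0 ≤ l)
    have h2 := hw y
    have h3 := hM ‖y‖ (norm_nonneg y)
    have h4 := psi_ge (x - y)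
    have h5 : ‖y‖ ≤ ‖x‖ + ‖x - y‖ := by
      have := norm_sub_le x (x - y)
      simpa using this
    have h6 := mul_le_mul_of_nonneg_left h5 (by linarith : 0 ≤ c + θ)
    have h7 : θ * ‖x‖ * 2 = (l - 1) * c * ‖x‖ := by rw [hθe]; ring
    nlinarith [sq_nonneg (‖x - y‖ - (c + θ + 1) / 2)]
  refine ⟨|K| / θ + |K|, fun x y h => ?_⟩
  have hk := key x y h
  have hd := norm_nonneg (x - y)
  have hx : ‖x‖ ≤ |K| / θ := by
    rw [le_div_iff₀ hθ]; nlinarith [le_abs_self K]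
  have hd' : ‖x - y‖ ≤ |K| := by
    have : 0 ≤ θ * ‖x‖ := by positivity
    linarith [le_abs_self K]
  have h5 : ‖y‖ ≤ ‖x‖ + ‖x - y‖ := by
    have := norm_sub_le x (x - y)
    simpa using this
  exact ⟨by linarith [abs_nonneg K], by linarith⟩

/-- Comparison principle for the stationary problem
`-(div(Dv/|Dv|)+1)|Dv| = f - c` in `ℝⁿ` within the class `Γ_f` of functions with the
growth `-c|x| - c(n-1)log(|x|+1) - C ≤ · ≤ -c|x| + C`: if the subsolution `v` is below
the supersolution `w` on `U = {f = max f}` (which contains a closed ball of radius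
`n-1`), then `v ≤ w` everywhere. -/
theorem stmt_11 (n : ℕ) (hn : 2 ≤ n)
    (f : EuclideanSpace ℝ (Fin n) → ℝ) (hfC1 : ContDiff ℝ 1 f)
    (hfnonneg : ∀ x, 0 ≤ f x) (hfne : ∃ x, f x ≠ 0) (hfsupp : HasCompactSupport f)
    (c : ℝ) (hc : IsGreatest (Set.range f) c) (hcpos : 0 < c)
    (hball : ∃ x₀ : EuclideanSpace ℝ (Fin n),
      Metric.closedBall x₀ ((n : ℝ) - 1) ⊆ {x : EuclideanSpace ℝ (Fin n) | f x = c})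
    (v w : EuclideanSpace ℝ (Fin n) → ℝ) (hvcont : Continuous v) (hwcont : Continuous w)
    (hv : StatSubsol (fun x => f x - c) Set.univ v)
    (hw : StatSupersol (fun x => f x - c) Set.univ w)
    (C : ℝ) (hCpos : 0 < C)
    (hvgrowth : ∀ x, -c * ‖x‖ - c * ((n : ℝ) - 1) * Real.log (‖x‖ + 1) - C ≤ v x ∧
      v x ≤ -c * ‖x‖ + C)
    (hwgrowth : ∀ x, -c * ‖x‖ - c * ((n : ℝ) - 1) * Real.log (‖x‖ + 1) - C ≤ w x ∧
      w x ≤ -c * ‖x‖ + C)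
    (hle : ∀ x ∈ {x : EuclideanSpace ℝ (Fin n) | f x = c}, v x ≤ w x) :
    ∀ x, v x ≤ w x := by
  intro x0
  by_contra hcon
  push Not at hcon
  have hf : Continuous f := hfC1.continuous
  obtain ⟨m, hm⟩ : ∃ m, m = (v x0 - w x0) / 2 := ⟨_, rfl⟩
  have hmpos : 0 < m := by rw [hm]; linarith
  have hden : 0 < |v x0| + C + 1 := by positivity
  obtain ⟨τ, hτ⟩ : ∃ τ, τ = m / (|v x0| + C + 1) := ⟨_, rfl⟩
  have hτpos : 0 < τ := by rw [hτ]; positivity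
  have hτm : τ * (|v x0| + C + 1) = m := by rw [hτ]; field_simp
  obtain ⟨l, hl⟩ : ∃ l, l = 1 + τ := ⟨_, rfl⟩
  have hl1 : 1 < l := by linarith
  have hx0 : m ≤ l * v x0 - w x0 := by
    have h1 : τ * (-|v x0|) ≤ τ * v x0 :=
      mul_le_mul_of_nonneg_left (neg_abs_le _) hτpos.le
    rw [hl]
    nlinarith [mul_pos hτpos hCpos]
  have hU : ∀ x, f x = c → l * v x - w x < m := by
    intro x hx
    have h1 := hle x hx
    have h2 : v x ≤ C := by
      have := (hvgrowth x).2
      have h3 : 0 ≤ c * ‖x‖ := by positivity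
      linarith
    have h4 := mul_le_mul_of_nonneg_left h2 hτpos.le
    rw [hl]
    nlinarith [mul_nonneg hτpos.le (abs_nonneg (v x0))]
  obtain ⟨R, hR⟩ := bounded_aux hn v w c C l hcpos hl1 (fun x => (hvgrowth x).2)
    (fun x => (hwgrowth x).1)
  have hcomp : IsCompact (Metric.closedBall (0 : EuclideanSpace ℝ (Fin n)) R ×ˢ
      Metric.closedBall (0 : EuclideanSpace ℝ (Fin n)) R) :=
    (isCompact_closedBall _ _).prod (isCompact_closedBall _ _)
  have hx0R : ‖x0‖ ≤ R := (hR x0 x0 (by rw [sub_self, psi_zero]; linarith)).1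
  have hne : (x0, x0) ∈ (Metric.closedBall (0 : EuclideanSpace ℝ (Fin n)) R ×ˢ
      Metric.closedBall (0 : EuclideanSpace ℝ (Fin n)) R) := by
    simpa using hx0R
  have hex : ∀ j : ℕ, ∃ p ∈ (Metric.closedBall (0 : EuclideanSpace ℝ (Fin n)) R ×ˢ
      Metric.closedBall (0 : EuclideanSpace ℝ (Fin n)) R),
      ∀ x y, l * v x - w y - ((j : ℝ) + 1) * psi (x - y) ≤
        l * v p.1 - w p.2 - ((j : ℝ) + 1) * psi (p.1 - p.2) := by
    intro j
    have hcont : Continuous (fun p : EuclideanSpace ℝ (Fin n) × EuclideanSpace ℝ (Fin n) =>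
        l * v p.1 - w p.2 - ((j : ℝ) + 1) * psi (p.1 - p.2)) := by
      have h1 : Continuous (fun p : EuclideanSpace ℝ (Fin n) × EuclideanSpace ℝ (Fin n) =>
        psi (p.1 - p.2)) := psi_cont.comp (continuous_fst.sub continuous_snd)
      fun_prop
    obtain ⟨p, hp, hpm⟩ := hcomp.exists_isMaxOn ⟨_, hne⟩ hcont.continuousOn
    refine ⟨p, hp, fun x y => ?_⟩
    by_cases hxy : (x, y) ∈ (Metric.closedBall (0 : EuclideanSpace ℝ (Fin n)) R ×ˢ
      Metric.closedBall (0 : EuclideanSpace ℝ (Fin n)) R)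
    · exact hpm hxy
    · have h1 := hpm hne
      simp only [mem_ofPred_eq, sub_self, psi_zero, mul_zero, sub_zero] at h1
      have h2 : l * v x - w y - psi (x - y) < 0 := by
        by_contra h
        push Not at h
        exact hxy (by simpa using hR x y h)
      have h3 : 0 ≤ (j : ℝ) * psi (x - y) := mul_nonneg (Nat.cast_nonneg j) (psi_nonneg _)
      linarith
  choose p hp hpm using hex
  obtain ⟨q, hq, φ, hφ, hlim⟩ := hcomp.tendsto_subseq hp
  have hbase : ∀ j : ℕ, m + ((j : ℝ) + 1) * psi ((p j).1 - (p j).2) ≤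
      l * v (p j).1 - w (p j).2 := by
    intro j
    have := hpm j x0 x0
    rw [sub_self, psi_zero] at this
    linarith
  have hG : Continuous (fun p : EuclideanSpace ℝ (Fin n) × EuclideanSpace ℝ (Fin n) =>
        l * v p.1 - w p.2) := by fun_prop
  obtain ⟨B, hB⟩ := hcomp.bddAbove_image hG.continuousOn
  have hpsi : ∀ j : ℕ, psi ((p j).1 - (p j).2) ≤ B / ((j : ℝ) + 1) := by
    intro j
    have h1 : l * v (p j).1 - w (p j).2 ≤ B := hB (mem_image_of_mem _ (hp j))
    have h2 := hbase j
    rw [le_div_iff₀ (by positivity)]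
    linarith
  have hpl : Tendsto (fun j => psi ((p (φ j)).1 - (p (φ j)).2)) atTop (𝓝 (psi (q.1 - q.2))) := by
    have h1 : Continuous (fun p : EuclideanSpace ℝ (Fin n) × EuclideanSpace ℝ (Fin n) =>
        psi (p.1 - p.2)) := psi_cont.comp (continuous_fst.sub continuous_snd)
    exact (h1.tendsto q).comp hlim
  have hB0 : Tendsto (fun j : ℕ => B / (((φ j : ℕ) : ℝ) + 1)) atTop (𝓝 0) := by
    have h1 : Tendsto (fun j : ℕ => B / ((j : ℝ) + 1)) atTop (𝓝 0) :=
      tendsto_const_nhds.div_atTop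
        (tendsto_atTop_add_const_right _ _ tendsto_natCast_atTop_atTop)
    exact h1.comp hφ.tendsto_atTop
  have hq0 : psi (q.1 - q.2) = 0 :=
    le_antisymm (le_of_tendsto_of_tendsto' hpl hB0 (fun j => hpsi _)) (psi_nonneg _)
  have hq12 : q.1 = q.2 := sub_eq_zero.mp (psi_eq_zero _ hq0)
  have hqm : m ≤ l * v q.1 - w q.2 := by
    refine ge_of_tendsto' ((hG.tendsto q).comp hlim) (fun j => ?_)
    have h1 := hbase (φ j)
    have h2 : 0 ≤ (((φ j : ℕ) : ℝ) + 1) * psi ((p (φ j)).1 - (p (φ j)).2) :=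
      mul_nonneg (by positivity) (psi_nonneg _)
    simp only [Function.comp]
    linarith
  have hfq : f q.1 < c := by
    refine lt_of_le_of_ne (hc.2 (mem_range_self _)) (fun h => ?_)
    have := hU q.1 h
    rw [← hq12] at hqm
    linarith
  have hF1 : Continuous (fun p : EuclideanSpace ℝ (Fin n) × EuclideanSpace ℝ (Fin n) =>
      f p.1 - c) := by fun_prop
  have hF2 : Continuous (fun p : EuclideanSpace ℝ (Fin n) × EuclideanSpace ℝ (Fin n) =>
      l * (f p.1 - c) - (f p.2 - c)) := by fun_prop
  have e1 := ((hF1.tendsto q).comp hlim).eventually (gt_mem_nhds (show f q.1 - c < 0 by linarith))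
  have e2 := ((hF2.tendsto q).comp hlim).eventually
    (gt_mem_nhds (show l * (f q.1 - c) - (f q.2 - c) < 0 by
      rw [← hq12]; nlinarith))
  obtain ⟨j, h1, h2⟩ := (e1.and e2).exists
  simp only [Function.comp] at h1 h2
  exact core hn (fun x => f x - c) v w (by fun_prop) hvcont hwcont hv hw l
    (((φ j : ℕ) : ℝ) + 1) (by linarith) (by positivity) (p (φ j)).1 (p (φ j)).2
    (hpm (φ j)) h1 (by linarith)
end

section
/- Let a > 0 and let U := ⋃_{s ∈ [-a,a]} B̄((s,0),1) ⊂ ℝ² be the stadium-shaped set, with interior U°. Define v : U → ℝ by v(x₁,x₂) := min(0, √(1 - x₂²) - x₁) (equivalently, v(x) = 0 when x₁ ≤ 0 or |x| ≤ 1, and v(x) = √(1-x₂²) - x₁ otherwise). Then v is continuous on U, v = 0 on the unit ball B(0,1), v is not identically 0 on U°, and v is a viscosity solution of -(div(Dv/|Dv|)+1)|Dv| = 0 in U°; moreover, for every λ > 0 the function λ·v is also such a viscosity solution, so this equation has infinitely many pairwise distinct continuous solutions on U° vanishing on B(0,1) but not identically zero. -/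
open Set Filter Topology
open scoped RealInnerProductSpace

/-- The point `(s, 0) ∈ ℝ²`. -/
noncomputable def pt (s : ℝ) : EuclideanSpace ℝ (Fin 2) :=
  (WithLp.equiv 2 (Fin 2 → ℝ)).symm ![s, 0]

/-- The stadium-shaped set `U = ⋃_{s ∈ [-a,a]} B̄((s,0),1)`. -/
def stadium (a : ℝ) : Set (EuclideanSpace ℝ (Fin 2)) :=
  ⋃ s ∈ Set.Icc (-a) a, Metric.closedBall (pt s) 1

/-- `v(x) = min(0, √(1-x₂²) - x₁)`. -/
noncomputable def vStadium (x : EuclideanSpace ℝ (Fin 2)) : ℝ :=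
  min 0 (Real.sqrt (1 - (x 1) ^ 2) - x 0)


abbrev E2 := EuclideanSpace ℝ (Fin 2)

noncomputable def vec2 (a b : ℝ) : E2 := WithLp.toLp 2 ![a, b]

@[simp] lemma vec2_zero (a b : ℝ) : vec2 a b 0 = a := rfl
@[simp] lemma vec2_one (a b : ℝ) : vec2 a b 1 = b := rfl

lemma inner_E2 (x y : E2) : inner ℝ x y = x 0 * y 0 + x 1 * y 1 := by
  simp [PiLp.inner_apply, Fin.sum_univ_two]; ring

lemma normsq_E2 (x : E2) : ‖x‖ ^ 2 = x 0 ^ 2 + x 1 ^ 2 := by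
  rw [EuclideanSpace.norm_sq_eq]; simp [Fin.sum_univ_two]

lemma E2_ext {x y : E2} (h0 : x 0 = y 0) (h1 : x 1 = y 1) : x = y := by
  ext i; fin_cases i <;> assumption

lemma E2_decomp (x : E2) : x = x 0 • vec2 1 0 + x 1 • vec2 0 1 := by
  apply E2_ext <;> simp

lemma trace_E2 (A : E2 →L[ℝ] E2) : clmTrace A = A (vec2 1 0) 0 + A (vec2 0 1) 1 := by
  have h := LinearMap.trace_eq_matrix_trace ℝ (EuclideanSpace.basisFun (Fin 2) ℝ).toBasis
    A.toLinearMap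
  have e0 : EuclideanSpace.single (0 : Fin 2) (1 : ℝ) = vec2 1 0 := by
    apply E2_ext <;> simp
  have e1 : EuclideanSpace.single (1 : Fin 2) (1 : ℝ) = vec2 0 1 := by
    apply E2_ext <;> simp
  unfold clmTrace
  rw [h, Matrix.trace_fin_two]
  simp [LinearMap.toMatrix_apply, e0, e1]

lemma trProj_E2 (A : E2 →L[ℝ] E2) (c s k : ℝ) (h : c ^ 2 + s ^ 2 = 1) (hk : k ^ 2 = 1) :
    trProj A (k • vec2 c s) = inner ℝ (A (vec2 (-s) c)) (vec2 (-s) c) := by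
  have h1 : A (vec2 c s) = c • A (vec2 1 0) + s • A (vec2 0 1) := by
    conv_lhs => rw [E2_decomp (vec2 c s)]
    simp
  have h2 : A (vec2 (-s) c) = (-s) • A (vec2 1 0) + c • A (vec2 0 1) := by
    conv_lhs => rw [E2_decomp (vec2 (-s) c)]
    simp
  unfold trProj
  rw [trace_E2, map_smul, h1, h2, inner_E2, inner_E2]
  simp
  generalize A (vec2 1 0) 0 = p
  generalize A (vec2 1 0) 1 = q
  generalize A (vec2 0 1) 0 = u
  generalize A (vec2 0 1) 1 = w
  linear_combination (-(p + w)) * h - ((c * p + s * u) * c + (c * q + s * w) * s) * hk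

lemma second_deriv_nonneg {f f' : ℝ → ℝ} {t f'' : ℝ} (hf : ∀ x, HasDerivAt f (f' x) x)
    (hf' : HasDerivAt f' f'' t) (hmin : IsLocalMin f t) : 0 ≤ f'' := by
  by_contra hneg
  push Not at hneg
  have hd : deriv f = f' := funext fun x => (hf x).deriv
  have h0 : f' t = 0 := hmin.hasDerivAt_eq_zero (hf t)
  have hmax : IsLocalMax f t := by
    have := isLocalMin_of_deriv_deriv_pos (f := fun x => - f x) (x₀ := t) ?_ ?_ ?_
    · simpa using this.neg
    · have : deriv (fun x => - f x) = fun x => - f' x := funext fun x => ((hf x).neg).deriv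
      rw [this, (hf'.fun_neg).deriv]; linarith
    · rw [((hf t).fun_neg).deriv, h0, neg_zero]
    · exact (hf t).continuousAt.neg
  have hc : f =ᶠ[𝓝 t] fun _ => f t := by
    filter_upwards [hmin, hmax] with x h1 h2 using le_antisymm h2 h1
  have hc2 : f' =ᶠ[𝓝 t] fun _ => 0 := by
    have := hc.deriv
    rw [hd] at this
    simpa using this
  have := (hc2.hasDerivAt_iff.1 hf').unique (hasDerivAt_const t 0)
  linarith

noncomputable def gam (x : E2) (t₀ t : ℝ) : E2 :=
  x + ((Real.cos t - Real.cos t₀) • vec2 1 0 + (Real.sin t - Real.sin t₀) • vec2 0 1)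

lemma gam_zero (x : E2) (t₀ t : ℝ) : gam x t₀ t 0 = x 0 + (Real.cos t - Real.cos t₀) := by
  simp [gam]
lemma gam_one (x : E2) (t₀ t : ℝ) : gam x t₀ t 1 = x 1 + (Real.sin t - Real.sin t₀) := by
  simp [gam]
lemma gam_self (x : E2) (t₀ : ℝ) : gam x t₀ t₀ = x := by
  simp [gam]

lemma vec2_eq (a b : ℝ) : vec2 a b = a • vec2 1 0 + b • vec2 0 1 := E2_decomp _

lemma gam_deriv (x : E2) (t₀ t : ℝ) :
    HasDerivAt (gam x t₀) (vec2 (-Real.sin t) (Real.cos t)) t := by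
  rw [vec2_eq]
  exact ((((Real.hasDerivAt_cos t).sub_const _).smul_const _).add
    (((Real.hasDerivAt_sin t).sub_const _).smul_const _)).const_add x

lemma gam_deriv2 (t : ℝ) :
    HasDerivAt (fun t => vec2 (-Real.sin t) (Real.cos t))
      (vec2 (-Real.cos t) (-Real.sin t)) t := by
  have : (fun t => vec2 (-Real.sin t) (Real.cos t)) =
      fun t => (-Real.sin t) • vec2 1 0 + Real.cos t • vec2 0 1 := funext fun t => vec2_eq _ _
  rw [this, vec2_eq (-Real.cos t)]
  exact ((Real.hasDerivAt_sin t).fun_neg.smul_const (vec2 1 0)).add ((Real.hasDerivAt_cos t).smul_const (vec2 0 1))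

lemma grad_diff {φ : E2 → ℝ} (hφ : ContDiff ℝ 2 φ) : Differentiable ℝ (gradient φ) := by
  have h1 : ContDiff ℝ 1 (fderiv ℝ φ) := hφ.fderiv_right (by norm_num)
  have h2 : Differentiable ℝ (fderiv ℝ φ) := h1.differentiable (by norm_num)
  exact (InnerProductSpace.toDual ℝ E2).symm.toContinuousLinearEquiv.differentiable.comp h2

lemma phi_curve {φ : E2 → ℝ} (hφ : ContDiff ℝ 2 φ) {γ : ℝ → E2} {γ' : E2} {t : ℝ}
    (h : HasDerivAt γ γ' t) :
    HasDerivAt (fun t => φ (γ t)) (inner ℝ (gradient φ (γ t)) γ') t := by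
  have h1 : DifferentiableAt ℝ φ (γ t) := hφ.differentiable (by norm_num) _
  have h2 := h1.hasGradientAt.hasFDerivAt.comp_hasDerivAt t h
  have h3 : ((InnerProductSpace.toDual ℝ E2) (gradient φ (γ t))) γ' =
      inner ℝ (gradient φ (γ t)) γ' := by simp
  rw [← h3]
  exact h2

lemma phi_gam2 {φ : E2 → ℝ} (hφ : ContDiff ℝ 2 φ) (x : E2) (t₀ : ℝ) :
    HasDerivAt (fun t => inner ℝ (gradient φ (gam x t₀ t)) (vec2 (-Real.sin t) (Real.cos t)))
      (inner ℝ (hess φ x (vec2 (-Real.sin t₀) (Real.cos t₀))) (vec2 (-Real.sin t₀) (Real.cos t₀))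
        - inner ℝ (gradient φ x) (vec2 (Real.cos t₀) (Real.sin t₀))) t₀ := by
  have h1 : HasDerivAt (fun t => gradient φ (gam x t₀ t))
      (hess φ x (vec2 (-Real.sin t₀) (Real.cos t₀))) t₀ := by
    have := (grad_diff hφ (gam x t₀ t₀)).hasFDerivAt.comp_hasDerivAt t₀ (gam_deriv x t₀ t₀)
    rw [gam_self] at this
    exact this
  have := h1.inner ℝ (gam_deriv2 t₀)
  rw [gam_self] at this
  refine HasDerivAt.congr_deriv this ?_
  simp only [inner_E2, vec2_zero, vec2_one]
  ring

lemma v_gam (x : E2) (t₀ : ℝ) (hs : Real.sin t₀ = x 1) (hc : 0 < Real.cos t₀) :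
    ∀ᶠ t in 𝓝 t₀, vStadium (gam x t₀ t) = vStadium x := by
  have : ∀ᶠ t in 𝓝 t₀, 0 < Real.cos t :=
    Real.continuous_cos.continuousAt.eventually (lt_mem_nhds hc)
  filter_upwards [this] with t ht
  have key : ∀ u, 0 < Real.cos u → √(1 - Real.sin u ^ 2) = Real.cos u := fun u hu => by
    rw [← Real.cos_sq', Real.sqrt_sq hu.le]
  unfold vStadium
  rw [gam_zero, gam_one, ← hs, add_sub_cancel, key _ ht, key _ hc]
  congr 1; ring

lemma exists_angle {y : ℝ} (h : |y| < 1) : ∃ t, Real.sin t = y ∧ 0 < Real.cos t := by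
  rw [abs_lt] at h
  exact ⟨Real.arcsin y, Real.sin_arcsin h.1.le h.2.le, by
    rw [Real.cos_arcsin]; apply Real.sqrt_pos.2; nlinarith⟩

/-- Linear algebra: a vector orthogonal to the tangent. -/
lemma grad_normal (g : E2) (c s : ℝ) (h : c ^ 2 + s ^ 2 = 1)
    (ht : inner ℝ g (vec2 (-s) c) = 0) :
    g = inner ℝ g (vec2 c s) • vec2 c s ∧ |inner ℝ g (vec2 c s)| = ‖g‖ := by
  rw [inner_E2] at *
  simp only [vec2_zero, vec2_one] at *
  constructor
  · apply E2_ext <;> simp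
    · linear_combination (-g 0) * h - s * ht
    · linear_combination (-g 1) * h + c * ht
  · rw [← abs_of_nonneg (norm_nonneg g), ← sq_eq_sq_iff_abs_eq_abs, normsq_E2]
    linear_combination (g 0 ^ 2 + g 1 ^ 2) * h - (c * g 1 - s * g 0) * ht

lemma unit_normal (g : E2) (c s : ℝ) (h : c ^ 2 + s ^ 2 = 1) (hg : g ≠ 0)
    (ht : inner ℝ g (vec2 (-s) c) = 0) (A : E2 →L[ℝ] E2) :
    trProj A (‖g‖⁻¹ • g) = inner ℝ (A (vec2 (-s) c)) (vec2 (-s) c) := by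
  obtain ⟨h1, h2⟩ := grad_normal g c s h ht
  have hn : ‖g‖ ≠ 0 := norm_ne_zero_iff.2 hg
  have : ‖g‖⁻¹ • g = (‖g‖⁻¹ * inner ℝ g (vec2 c s)) • vec2 c s := by
    rw [mul_smul, ← h1]
  rw [this]
  apply trProj_E2 _ _ _ _ h
  rw [mul_pow, ← sq_abs (inner ℝ g (vec2 c s)), h2]
  field_simp

lemma norm_vec2 (c s : ℝ) (h : c ^ 2 + s ^ 2 = 1) : ‖vec2 c s‖ ≤ 1 := by
  have := normsq_E2 (vec2 c s)
  simp only [vec2_zero, vec2_one] at this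
  nlinarith [norm_nonneg (vec2 c s)]

lemma sub_aux (l : ℝ) (O : Set E2) (hO : ∀ x ∈ O, |x 1| < 1) :
    StatSubsol (fun _ => 0) O (fun x => l * vStadium x) := by
  intro φ hφ x hx hmax
  obtain ⟨t, hs, hc⟩ := exists_angle (hO x hx)
  have hcs := Real.cos_sq_add_sin_sq t
  have hmin : IsLocalMin (fun u => φ (gam x t u)) t := by
    have hcont : Tendsto (gam x t) (𝓝 t) (𝓝 x) := by
      have := (gam_deriv x t t).continuousAt.tendsto
      rwa [gam_self] at this
    filter_upwards [hcont.eventually hmax, v_gam x t hs hc] with u h1 h2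
    simp only [h2] at h1
    rw [gam_self]; linarith
  have hd := fun u => phi_curve hφ (gam_deriv x t u)
  have h2 := second_deriv_nonneg hd (phi_gam2 hφ x t) hmin
  have h1 := hmin.hasDerivAt_eq_zero (hd t)
  rw [gam_self] at h1
  obtain ⟨_, hn⟩ := grad_normal _ _ _ hcs h1
  constructor
  · intro hg
    rw [unit_normal _ _ _ hcs hg h1, ← hn]
    have := neg_abs_le (inner ℝ (gradient φ x) (vec2 (Real.cos t) (Real.sin t)))
    linarith
  · intro hg
    refine ⟨vec2 (Real.cos t) (Real.sin t), norm_vec2 _ _ hcs, ?_⟩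
    have := trProj_E2 (hess φ x) _ _ 1 hcs (by norm_num)
    rw [one_smul] at this
    rw [this]
    rw [hg, inner_zero_left] at h2
    linarith

lemma v_antitone (x : E2) (u : ℝ) (hu : 0 ≤ u) : vStadium (x + u • vec2 1 0) ≤ vStadium x := by
  unfold vStadium
  apply min_le_min le_rfl
  simp
  linarith

lemma super_aux (l : ℝ) (hl : 0 < l) (O : Set E2) (hO : ∀ x ∈ O, |x 1| < 1) :
    StatSupersol (fun _ => 0) O (fun x => l * vStadium x) := by
  intro φ hφ x hx hmin
  obtain ⟨t, hs, hc⟩ := exists_angle (hO x hx)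
  have hcs := Real.cos_sq_add_sin_sq t
  have hmax : IsLocalMax (fun u => φ (gam x t u)) t := by
    have hcont : Tendsto (gam x t) (𝓝 t) (𝓝 x) := by
      have := (gam_deriv x t t).continuousAt.tendsto
      rwa [gam_self] at this
    filter_upwards [hcont.eventually hmin, v_gam x t hs hc] with u h1 h2
    simp only [h2] at h1
    rw [gam_self]; linarith
  have hd := fun u => phi_curve hφ (gam_deriv x t u)
  have h2 := second_deriv_nonneg (fun u => (hd u).fun_neg) (phi_gam2 hφ x t).fun_neg hmax.neg
  have h1 := hmax.hasDerivAt_eq_zero (hd t)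
  rw [gam_self] at h1
  obtain ⟨hg1, hn⟩ := grad_normal _ _ _ hcs h1
  constructor
  · intro hg
    have hL : HasDerivAt (fun u : ℝ => x + u • vec2 1 0) (vec2 1 0) 0 := by
      simpa using ((hasDerivAt_id (0 : ℝ)).smul_const (vec2 1 0)).const_add x
    have hdL := phi_curve hφ hL
    have hle : inner ℝ (gradient φ x) (vec2 1 0) ≤ 0 := by
      have hw := hdL.hasDerivWithinAt (s := Set.Ioi 0)
      simp only [zero_smul, add_zero] at hw
      rw [hasDerivWithinAt_iff_tendsto_slope' (by simp)] at hw
      refine le_of_tendsto hw ?_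
      have hcont : Tendsto (fun u : ℝ => x + u • vec2 1 0) (𝓝[>] 0) (𝓝 x) := by
        have := hL.continuousAt.tendsto
        simp only [zero_smul, add_zero] at this
        exact this.mono_left nhdsWithin_le_nhds
      filter_upwards [hcont.eventually hmin, self_mem_nhdsWithin] with u h1 h2
      have h3 : 0 < u := h2
      have h4 := mul_le_mul_of_nonneg_left (v_antitone x u h3.le) hl.le
      rw [slope_def_field]
      simp only [zero_smul, add_zero, sub_zero]
      exact div_nonpos_of_nonpos_of_nonneg (by linarith) h3.le
    have hp : inner ℝ (gradient φ x) (vec2 (Real.cos t) (Real.sin t)) ≤ 0 := by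
      rw [hg1, inner_smul_left, inner_E2 (vec2 _ _)] at hle
      simp only [vec2_zero, vec2_one, conj_trivial, mul_one, mul_zero, add_zero] at hle
      by_contra hcon
      push Not at hcon
      have := mul_pos hcon hc
      linarith
    rw [unit_normal _ _ _ hcs hg h1, ← hn, abs_of_nonpos hp]
    linarith
  · intro hg
    refine ⟨vec2 (Real.cos t) (Real.sin t), norm_vec2 _ _ hcs, ?_⟩
    have := trProj_E2 (hess φ x) _ _ 1 hcs (by norm_num)
    rw [one_smul] at this
    rw [this]
    rw [hg, inner_zero_left] at h2
    linarith

lemma pt_eq (s : ℝ) : pt s = vec2 s 0 := rfl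

lemma interior_lt (a : ℝ) : ∀ x ∈ interior (stadium a), |x 1| < 1 := by
  intro x hx
  have hS : ∀ y ∈ stadium a, y 1 ≤ 1 ∧ -1 ≤ y 1 := by
    intro y hy
    simp only [stadium, mem_iUnion, Metric.mem_closedBall, dist_eq_norm] at hy
    obtain ⟨s, _, hy⟩ := hy
    have := normsq_E2 (y - pt s)
    rw [pt_eq] at this hy
    simp at this
    constructor <;> nlinarith [norm_nonneg (y - vec2 s 0), sq_nonneg (y 0 - s)]
  have hev : ∀ᶠ u in 𝓝 (0 : ℝ), x + u • vec2 0 1 ∈ stadium a := by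
    have hcont : Tendsto (fun u : ℝ => x + u • vec2 0 1) (𝓝 0) (𝓝 x) := by
      have : Continuous (fun u : ℝ => x + u • vec2 0 1) := by fun_prop
      simpa using this.tendsto 0
    exact hcont.eventually (mem_interior_iff_mem_nhds.1 hx)
  obtain ⟨ε, hε, h⟩ := Metric.eventually_nhds_iff.1 hev
  have h1 := hS _ (h (y := ε / 2) (by simp [abs_of_pos hε]; linarith))
  have h2 := hS _ (h (y := -(ε / 2)) (by simp [abs_of_pos hε]; linarith))
  simp at h1 h2
  rw [abs_lt]; constructor <;> linarith

lemma exists_neg_pt (a : ℝ) (ha : 0 < a) : ∃ x ∈ interior (stadium a), vStadium x ≠ 0 := by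
  have hm : 0 < min a 1 := lt_min ha one_pos
  have hm1 := min_le_right a 1
  have hma := min_le_left a 1
  generalize min a 1 = m at *
  refine ⟨vec2 (1 + m / 2) 0, ?_, ?_⟩
  · have hsub : Metric.ball (pt m) 1 ⊆ stadium a := by
      refine Metric.ball_subset_closedBall.trans ?_
      exact subset_biUnion_of_mem (u := fun s => Metric.closedBall (pt s) 1)
        (show m ∈ Set.Icc (-a) a from ⟨by linarith, hma⟩)
    refine interior_maximal hsub Metric.isOpen_ball ?_
    rw [Metric.mem_ball, dist_eq_norm]
    have := normsq_E2 (vec2 (1 + m / 2) 0 - pt m)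
    simp [pt_eq] at this
    rw [pt_eq]
    nlinarith [norm_nonneg (vec2 (1 + m / 2) 0 - vec2 m 0)]
  · have : vStadium (vec2 (1 + m / 2) 0) ≤ -(m / 2) := by
      unfold vStadium
      refine (min_le_right _ _).trans ?_
      simp
    intro h
    linarith

lemma v_zero (x : E2) (h : x 0 ≤ 0 ∨ ‖x‖ ≤ 1) : vStadium x = 0 := by
  unfold vStadium
  apply min_eq_left
  rw [sub_nonneg]
  rcases h with h | h
  · exact h.trans (Real.sqrt_nonneg _)
  · apply Real.le_sqrt_of_sq_le
    have := normsq_E2 x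
    nlinarith [norm_nonneg x]

lemma v_else (x : E2) (h : ¬(x 0 ≤ 0 ∨ ‖x‖ ≤ 1)) :
    vStadium x = Real.sqrt (1 - (x 1) ^ 2) - x 0 := by
  push Not at h
  unfold vStadium
  apply min_eq_right
  rw [sub_nonpos]
  apply Real.sqrt_le_iff.2 ⟨h.1.le, ?_⟩
  have := normsq_E2 x
  nlinarith [h.2]

/-- On the stadium `U`, the function `v = min(0, √(1-x₂²) - x₁)`
(equal to `0` when `x₁ ≤ 0` or `|x| ≤ 1`, and to `√(1-x₂²) - x₁` otherwise) is
continuous, vanishes on `B(0,1)`, is not identically `0` on `U°`, and is a viscosity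
solution of `-(div(Dv/|Dv|)+1)|Dv| = 0` in `U°`; moreover every `λ·v` with `λ > 0` is
also such a solution, and these are pairwise distinct on `U°`, so the equation has
infinitely many distinct continuous solutions vanishing on `B(0,1)` but not
identically zero. -/
theorem stmt_16 (a : ℝ) (ha : 0 < a) :
    ContinuousOn vStadium (stadium a) ∧
    (∀ x ∈ Metric.ball (0 : EuclideanSpace ℝ (Fin 2)) 1, vStadium x = 0) ∧
    (∀ x ∈ stadium a,
      ((x 0 ≤ 0 ∨ ‖x‖ ≤ 1) → vStadium x = 0) ∧
      (¬(x 0 ≤ 0 ∨ ‖x‖ ≤ 1) → vStadium x = Real.sqrt (1 - (x 1) ^ 2) - x 0)) ∧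
    (∃ x ∈ interior (stadium a), vStadium x ≠ 0) ∧
    StatSubsol (fun _ => 0) (interior (stadium a)) vStadium ∧
    StatSupersol (fun _ => 0) (interior (stadium a)) vStadium ∧
    (∀ l : ℝ, 0 < l →
      StatSubsol (fun _ => 0) (interior (stadium a)) (fun x => l * vStadium x) ∧
      StatSupersol (fun _ => 0) (interior (stadium a)) (fun x => l * vStadium x)) ∧
    (∀ l m : ℝ, 0 < l → 0 < m → l ≠ m →
      ∃ x ∈ interior (stadium a), l * vStadium x ≠ m * vStadium x) := by
  refine ⟨?_, ?_, fun x _ => ⟨v_zero x, v_else x⟩, exists_neg_pt a ha, ?_, ?_, ?_, ?_⟩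
  · apply Continuous.continuousOn
    unfold vStadium
    fun_prop
  · intro x hx
    exact v_zero x (Or.inr (by simpa using (mem_ball_zero_iff.1 hx).le))
  · simpa using sub_aux 1 _ (interior_lt a)
  · simpa using super_aux 1 one_pos _ (interior_lt a)
  · exact fun l hl => ⟨sub_aux l _ (interior_lt a), super_aux l hl _ (interior_lt a)⟩
  · intro l m _ _ hlm
    obtain ⟨x, hx, hv⟩ := exists_neg_pt a ha
    exact ⟨x, hx, fun h => hlm (mul_right_cancel₀ hv h)⟩
end

section
/- Let a < b be reals and let g : (a,b) → ℝ be differentiable. Suppose the function s(x) := g'(x)/√(1 + g'(x)²) is differentiable on (a,b) with s'(x) = -1 for every x ∈ (a,b) (i.e., g solves the graph equation -(d/dx)(g'/√(1+g'²)) = 1 of curvature one). Then the graph of g lies on a unit circle: there exist p, q ∈ ℝ such that (x - p)² + (g(x) - q)² = 1 for all x ∈ (a,b). -/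
open Set

lemma const_aux (a b : ℝ) (hab : a < b) (f : ℝ → ℝ)
    (hf : ∀ x ∈ Set.Ioo a b, HasDerivAt f 0 x) : ∃ c, ∀ x ∈ Set.Ioo a b, f x = c := by
  refine ⟨f ((a+b)/2), fun x hx => ?_⟩
  have hm : (a+b)/2 ∈ Set.Ioo a b := ⟨by linarith, by linarith⟩
  exact isOpen_Ioo.is_const_of_deriv_eq_zero isPreconnected_Ioo
    (fun y hy => (hf y hy).differentiableAt.differentiableWithinAt)
    (fun y hy => (hf y hy).deriv) hx hm

/-- If `g : (a,b) → ℝ` is differentiable and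
`s(x) = g'(x)/√(1+g'(x)²)` is differentiable with `s' ≡ -1` on `(a,b)` (the graph
equation of curvature one), then the graph of `g` lies on a unit circle: there are
`p, q` with `(x-p)² + (g(x)-q)² = 1` on `(a,b)`. -/
theorem stmt_17 (a b : ℝ) (hab : a < b) (g g' : ℝ → ℝ)
    (hg : ∀ x ∈ Set.Ioo a b, HasDerivAt g (g' x) x)
    (hs : ∀ x ∈ Set.Ioo a b,
      HasDerivAt (fun y => g' y / Real.sqrt (1 + (g' y) ^ 2)) (-1) x) :
    ∃ p q : ℝ, ∀ x ∈ Set.Ioo a b, (x - p) ^ 2 + (g x - q) ^ 2 = 1 := by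
  obtain ⟨p, hp⟩ := const_aux a b hab
    (fun y => g' y / Real.sqrt (1 + (g' y) ^ 2) + y) (fun x hx => by
      have h0 := (hs x hx).add (hasDerivAt_id' x)
      rw [show (-1 : ℝ) + 1 = 0 by norm_num] at h0
      exact h0)
  have key : ∀ x ∈ Set.Ioo a b, 0 < 1 - (x - p) ^ 2 ∧
      g' x = -(x - p) / Real.sqrt (1 - (x - p) ^ 2) := by
    intro x hx
    have h := hp x hx
    have hpos : 0 < 1 + (g' x) ^ 2 := by positivity
    have hr : 0 < Real.sqrt (1 + (g' x) ^ 2) := Real.sqrt_pos.2 hpos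
    have hsq := Real.sq_sqrt hpos.le
    set r := Real.sqrt (1 + (g' x) ^ 2) with hrdef
    have h1 : x - p = -(g' x / r) := by linarith
    have h2 : 1 - (x - p) ^ 2 = (1 / r) ^ 2 := by
      rw [h1]; field_simp; linarith
    rw [h2, Real.sqrt_sq (by positivity), h1]
    refine ⟨by positivity, ?_⟩
    field_simp
  obtain ⟨q, hq⟩ := const_aux a b hab
    (fun y => g y - Real.sqrt (1 - (y - p) ^ 2)) (fun x hx => by
      obtain ⟨h1, h2⟩ := key x hx
      have h3 : HasDerivAt (fun y : ℝ => 1 - (y - p) ^ 2) (-(2 * (x - p))) x := by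
        simpa using (((hasDerivAt_id' x).sub_const p).pow 2).const_sub 1
      have h4 := (hg x hx).sub (h3.sqrt h1.ne')
      have h6 := Real.sqrt_pos.2 h1
      have h7 : g' x - -(2 * (x - p)) / (2 * √(1 - (x - p) ^ 2)) = 0 := by
        rw [h2]; field_simp; ring
      rw [h7] at h4
      exact h4)
  refine ⟨p, q, fun x hx => ?_⟩
  have h := hq x hx
  have h5 : g x - q = Real.sqrt (1 - (x - p) ^ 2) := by linarith
  rw [h5, Real.sq_sqrt (key x hx).1.le]; ring
end

section
/- Let U ⊆ ℝ² be open and convex, and let D ⊆ U be an open set which is a stationary set-theoretic supersolution of -κ - 1 ≥ 0 on ∂D ∩ U, i.e., the function (x,t) ↦ 𝟙_D(x) is a viscosity supersolution of u_t - (div(Du/|Du|)+1)|Du| = 0 in U × (0,∞). Then every connected component of D is convex. -/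
open Set Filter Topology
open scoped RealInnerProductSpace

theorem no_linear_touch (U D : Set E2)
    (hsuper : ParabSupersol (fun _ => 0) U
      (fun x _ => Set.indicator D (fun _ => (1 : ℝ)) x))
    (x₀ w : E2) (hU : x₀ ∈ U) (hD : x₀ ∉ D) (hw : w ≠ 0)
    (h : ∀ᶠ x in 𝓝 x₀, 0 < ⟪w, x - x₀⟫ → x ∈ D) : False := by
  have hg : ∀ y : E2, gradient (fun z : E2 => ⟪w, z - x₀⟫) y = w := by
    intro y
    apply HasGradientAt.gradient
    rw [hasGradientAt_iff_hasFDerivAt]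
    have h1 := ((InnerProductSpace.toDual ℝ E2 w).hasFDerivAt (x := y - x₀)).comp y
      ((hasFDerivAt_id y).sub_const x₀)
    exact h1
  have key := hsuper (fun x _ => ⟪w, x - x₀⟫)
    (contDiff_const.inner ℝ (contDiff_fst.sub contDiff_const)) x₀ hU 1 one_pos ?_
  · have hs : sGrad (fun (x : E2) (_ : ℝ) => ⟪w, x - x₀⟫) x₀ 1 = w := hg x₀
    have hh : sHess (fun (x : E2) (_ : ℝ) => ⟪w, x - x₀⟫) x₀ 1 = 0 := by
      unfold sHess
      simp only [hg]
      simp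
    have h2 := key.1 (by rw [hs]; exact hw)
    rw [hs, hh] at h2
    have := norm_pos_iff.2 hw
    simp [trProj, clmTrace, tDeriv] at h2
    exact hw h2
  · have hc : ∀ᶠ x in 𝓝 x₀, ⟪w, x - x₀⟫ < 1 := by
      have : ContinuousAt (fun x : E2 => ⟪w, x - x₀⟫) x₀ := by fun_prop
      exact this.eventually_lt_const (by simp)
    have h3 : ∀ᶠ p : E2 × ℝ in 𝓝 (x₀, (1 : ℝ)),
        (0 < ⟪w, p.1 - x₀⟫ → p.1 ∈ D) ∧ ⟪w, p.1 - x₀⟫ < 1 :=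
      (continuous_fst.tendsto (x₀, (1 : ℝ))).eventually (h.and hc)
    filter_upwards [h3] with p hp
    simp only [sub_self, inner_zero_right, Set.indicator_of_notMem hD]
    by_cases hpD : p.1 ∈ D
    · rw [Set.indicator_of_mem hpD]; linarith [hp.2]
    · rw [Set.indicator_of_notMem hpD]
      by_contra hlt
      exact hpD (hp.1 (by linarith))

theorem seg_trans (U : Set E2) (hUconv : Convex ℝ U) (D : Set E2) (hDopen : IsOpen D)
    (hDU : D ⊆ U)
    (hsuper : ParabSupersol (fun _ => 0) U
      (fun x _ => Set.indicator D (fun _ => (1 : ℝ)) x))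
    (p a b : E2) (h1 : segment ℝ p a ⊆ D) (h2 : segment ℝ a b ⊆ D) :
    segment ℝ p b ⊆ D := by
  have seg1 : ∀ l ∈ Icc (0 : ℝ) 1, p + l • (a - p) ∈ D := fun l hl =>
    h1 (by rw [segment_eq_image']; exact ⟨l, hl, rfl⟩)
  have seg2 : ∀ l ∈ Icc (0 : ℝ) 1, a + l • (b - a) ∈ D := fun l hl =>
    h2 (by rw [segment_eq_image']; exact ⟨l, hl, rfl⟩)
  have hpD : p ∈ D := h1 (left_mem_segment ℝ p a)
  set d : ℝ := (a - p) 0 * (b - a) 1 - (a - p) 1 * (b - a) 0 with hd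
  by_cases hd0 : d = 0
  · have hk : a - p = 0 ∨ ∃ k : ℝ, b - a = k • (a - p) := by
      by_cases e0 : (a - p) 0 = 0
      · by_cases e1 : (a - p) 1 = 0
        · left
          ext i
          fin_cases i
          · exact e0
          · exact e1
        · right
          refine ⟨(b - a) 1 / (a - p) 1, ?_⟩
          have hb0 : (b - a) 0 = 0 := by
            rw [hd, e0] at hd0
            have : (a - p) 1 * (b - a) 0 = 0 := by linarith
            exact (mul_eq_zero.1 this).resolve_left e1
          ext i
          fin_cases i
          · show (b - a) 0 = (b - a) 1 / (a - p) 1 * (a - p) 0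
            rw [hb0, e0]; ring
          · show (b - a) 1 = (b - a) 1 / (a - p) 1 * (a - p) 1
            rw [div_mul_cancel₀ _ e1]
      · right
        refine ⟨(b - a) 0 / (a - p) 0, ?_⟩
        ext i
        fin_cases i
        · show (b - a) 0 = (b - a) 0 / (a - p) 0 * (a - p) 0
          rw [div_mul_cancel₀ _ e0]
        · show (b - a) 1 = (b - a) 0 / (a - p) 0 * (a - p) 1
          rw [div_mul_eq_mul_div, eq_div_iff e0]
          linarith
    rcases hk with h0 | ⟨k, hk⟩
    · rw [sub_eq_zero] at h0
      rwa [h0] at h2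
    · rw [segment_eq_image']
      rintro _ ⟨s, hs, rfl⟩
      have hb : b - p = (1 + k) • (a - p) := by
        have : b - p = (b - a) + (a - p) := by abel
        rw [this, hk]; module
      show p + s • (b - p) ∈ D
      by_cases hm : s * (1 + k) ∈ Icc (0 : ℝ) 1
      · have := seg1 _ hm
        rwa [hb, smul_smul]
      · have hkl : k ≠ 0 ∧ (s * (1 + k) - 1) / k ∈ Icc (0 : ℝ) 1 := by
          obtain ⟨s0, s1⟩ := hs
          rw [mem_Icc, not_and_or, not_le, not_le] at hm
          rcases hm with hm | hm
          · have k0 : k < -1 := by nlinarith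
            have k1 : k < 0 := by linarith
            refine ⟨k1.ne, div_nonneg_of_nonpos (by linarith) k1.le, ?_⟩
            rw [div_le_one_of_neg k1]; nlinarith
          · have k1 : 0 < k := by nlinarith
            refine ⟨k1.ne', div_nonneg (by linarith) k1.le, ?_⟩
            rw [div_le_one k1]; nlinarith
        have := seg2 _ hkl.2
        rw [hk, smul_smul, div_mul_cancel₀ _ hkl.1] at this
        convert this using 1
        rw [hb]
        module
  let F : ℝ × ℝ → E2 := fun q => p + q.1 • (a - p) + (q.1 * q.2) • (b - a)
  have hF : Continuous F := by fun_prop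
  let K : Set (ℝ × ℝ) := (Icc 0 1 ×ˢ Icc 0 1) ∩ F ⁻¹' Dᶜ
  have hK : IsCompact K := (isCompact_Icc.prod isCompact_Icc).inter_right
    (hDopen.isClosed_compl.preimage hF)
  by_contra hcon
  have hne : K.Nonempty := by
    obtain ⟨z, hz, hzD⟩ := Set.not_subset.1 hcon
    rw [segment_eq_image'] at hz
    obtain ⟨l, hl, rfl⟩ := hz
    refine ⟨(l, 1), ⟨hl, by simp⟩, ?_⟩
    have : F (l, 1) = p + l • (b - p) := by
      simp only [F, mul_one, add_assoc, ← smul_add]; congr 2; abel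
    show F (l, 1) ∉ D
    rwa [this]
  obtain ⟨⟨l, t⟩, ⟨⟨hl, ht⟩, hlD⟩, hmin⟩ := hK.exists_isMinOn hne continuous_snd.continuousOn
  simp only at hl ht
  have hlD : F (l, t) ∉ D := hlD
  have hl0 : 0 < l := by
    rcases hl.1.eq_or_lt with h | h
    · exfalso; apply hlD; subst h; simpa [F] using hpD
    · exact h
  have hl1 : l < 1 := by
    rcases hl.2.eq_or_lt with h | h
    · exfalso; apply hlD; subst h; simpa [F] using seg2 t ht
    · exact h
  have ht0 : 0 < t := by
    rcases ht.1.eq_or_lt with h | h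
    · exfalso; apply hlD; subst h; simpa [F] using seg1 l hl
    · exact h
  have hbelow : ∀ l' ∈ Icc (0 : ℝ) 1, ∀ t' ∈ Icc (0 : ℝ) 1, t' < t → F (l', t') ∈ D := by
    intro l' hl' t' ht' htt
    by_contra hn
    have : t ≤ t' := hmin (show (l', t') ∈ K from ⟨⟨hl', ht'⟩, hn⟩)
    linarith
  set x₀ := F (l, t) with hx₀
  have hxU : x₀ ∈ U := by
    have hc : a + t • (b - a) ∈ U := hDU (seg2 t ht)
    have := hUconv.add_smul_sub_mem (hDU hpD) hc hl
    convert this using 1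
    simp only [hx₀, F]
    module
  let u : E2 → ℝ := fun x => ((x - p) 0 * (b - a) 1 - (x - p) 1 * (b - a) 0) / d
  let v : E2 → ℝ := fun x => ((a - p) 0 * (x - p) 1 - (a - p) 1 * (x - p) 0) / d
  have hu : Continuous u := by fun_prop
  have hv : Continuous v := by fun_prop
  have hx : ∀ x, x = p + u x • (a - p) + v x • (b - a) := by
    intro x
    ext i
    fin_cases i <;> simp [u, v] <;> field_simp <;> simp [hd] <;> ring
  have hu0 : u x₀ = l := by
    simp only [u, hx₀, F]; rw [div_eq_iff hd0]; simp [hd]; ring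
  have hv0 : v x₀ = l * t := by
    simp only [v, hx₀, F]; rw [div_eq_iff hd0]; simp [hd]; ring
  let w : E2 := !₂[(t * (b - a) 1 + (a - p) 1) / d, (-t * (b - a) 0 - (a - p) 0) / d]
  have hwx : ∀ x, ⟪w, x - x₀⟫ = t * u x - v x := by
    intro x
    have : t * u x - v x = (t * u x - v x) - (t * u x₀ - v x₀) := by rw [hu0, hv0]; ring
    rw [this]
    simp [u, v, w, PiLp.inner_apply, Fin.sum_univ_two]
    field_simp
    ring
  refine no_linear_touch U D hsuper x₀ w hxU hlD ?_ ?_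
  · intro hw
    have := hwx a
    have e1 : u a = 1 := by simp only [u]; rw [div_eq_iff hd0, hd]; ring
    have e2 : v a = 0 := by simp only [v]; rw [div_eq_iff hd0]; ring
    rw [hw, e1, e2] at this
    simp at this
    linarith
  · have c1 := (hu.tendsto x₀).eventually_lt_const (u := 1) (by rw [hu0]; exact hl1)
    have c2 := (hu.tendsto x₀).eventually_const_lt (u := 0) (by rw [hu0]; exact hl0)
    have c3 := (hv.tendsto x₀).eventually_const_lt (u := 0)
      (by rw [hv0]; positivity)
    filter_upwards [c1, c2, c3] with x k1 k2 k3 hpos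
    rw [hwx] at hpos
    have htt : v x / u x < t := by rw [div_lt_iff₀ k2]; linarith
    have := hbelow (u x) ⟨k2.le, k1.le⟩ (v x / u x) ⟨by positivity, htt.le.trans ht.2⟩ htt
    simp only [F] at this
    rwa [mul_div_cancel₀ _ k2.ne', ← hx] at this

/-- Let `U ⊆ ℝ²` be open and convex and let `D ⊆ U` be open such
that `(x,t) ↦ 𝟙_D(x)` is a viscosity supersolution of the level-set equation
`u_t - (div(Du/|Du|)+1)|Du| = 0` in `U × (0,∞)` (i.e. `D` is a stationary
set-theoretic supersolution of `-κ - 1 ≥ 0` on `∂D ∩ U`).  Then every connected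
component of `D` is convex. -/
theorem stmt_18 (U : Set (EuclideanSpace ℝ (Fin 2))) (hUopen : IsOpen U)
    (hUconv : Convex ℝ U)
    (D : Set (EuclideanSpace ℝ (Fin 2))) (hDopen : IsOpen D) (hDU : D ⊆ U)
    (hsuper : ParabSupersol (fun _ => 0) U
      (fun x _ => Set.indicator D (fun _ => (1 : ℝ)) x)) :
    ∀ x ∈ D, Convex ℝ (connectedComponentIn D x) := by
  intro x hx
  have hC : IsPreconnected (connectedComponentIn D x) := isPreconnected_connectedComponentIn
  rw [convex_iff_segment_subset]
  intro y hy z hz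
  have hsub := connectedComponentIn_subset D x
  have hseg : segment ℝ y z ⊆ D := by
    refine hC.induction₂ (fun y z => segment ℝ y z ⊆ D) ?_ ?_ ?_ hy hz
    · intro y hy
      obtain ⟨r, hr, hball⟩ := Metric.isOpen_iff.1 hDopen y (hsub hy)
      refine mem_nhdsWithin_of_mem_nhds ?_
      filter_upwards [Metric.ball_mem_nhds y hr] with z hz
      exact ((convex_ball y r).segment_subset (Metric.mem_ball_self hr) hz).trans hball
    · intro p a b _ _ _ h1 h2
      exact seg_trans U hUconv D hDopen hDU hsuper p a b h1 h2
    · intro y z _ _ h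
      rwa [segment_symm]
  have h1 : segment ℝ y z ⊆ connectedComponentIn D y :=
    (convex_segment y z).isPreconnected.subset_connectedComponentIn
      (left_mem_segment ℝ y z) hseg
  rwa [← connectedComponentIn_eq hy] at h1
end

section
/- Let D ⊂ ℝ² be open, connected, nonempty, with D ≠ ℝ², and suppose D is a stationary set-theoretic solution of -κ - 1 = 0 on ∂D, i.e., the constant-in-time family D_t = D is a set-theoretic solution of the surface evolution V = κ + 1: the upper semicontinuous function (x,t) ↦ 𝟙_{cl(D)}(x) is a viscosity subsolution, and the lower semicontinuous function (x,t) ↦ 𝟙_D(x) is a viscosity supersolution, of u_t - (div(Du/|Du|)+1)|Du| = 0 in ℝ² × (0,∞). Then D is an open unit disk, i.e., there exists z ∈ ℝ² such that D = B(z,1). -/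
open Set Filter Topology
open scoped RealInnerProductSpace

lemma grad_aux (z x : E2) : gradient (fun y : E2 => -‖y - z‖^2) x = (-2 : ℝ) • (x - z) := by
  apply HasGradientAt.gradient
  rw [hasGradientAt_iff_hasFDerivAt]
  have h := ((hasStrictFDerivAt_norm_sq (x - z)).hasFDerivAt.comp x
    ((hasFDerivAt_id x).sub_const z)).neg
  refine h.congr_fderiv ?_
  ext v
  simp

lemma hess_aux (z x : E2) : fderiv ℝ (fun y : E2 => gradient (fun w : E2 => -‖w - z‖^2) y) x
    = (-2 : ℝ) • ContinuousLinearMap.id ℝ E2 := by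
  have : (fun y : E2 => gradient (fun w : E2 => -‖w - z‖^2) y) = fun y => (-2 : ℝ) • (y - z) := by
    funext y; exact grad_aux z y
  rw [this]
  exact (((hasFDerivAt_id x).sub_const z).const_smul (-2 : ℝ)).fderiv

lemma trProj_aux (η : E2) (h : ‖η‖ = 1) :
    trProj ((-2 : ℝ) • ContinuousLinearMap.id ℝ E2) η = -2 := by
  simp [trProj, clmTrace, LinearMap.trace_id, inner_smul_left, h]
  norm_num

lemma op_aux (z x₀ : E2) (h : x₀ ≠ z) :
    sGrad (fun (y : E2) (_ : ℝ) => -‖y - z‖^2) x₀ 1 ≠ 0 ∧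
    tDeriv (fun (y : E2) (_ : ℝ) => -‖y - z‖^2) x₀ 1 -
      (trProj (sHess (fun (y : E2) (_ : ℝ) => -‖y - z‖^2) x₀ 1)
        (‖sGrad (fun (y : E2) (_ : ℝ) => -‖y - z‖^2) x₀ 1‖⁻¹ •
          sGrad (fun (y : E2) (_ : ℝ) => -‖y - z‖^2) x₀ 1)
        + ‖sGrad (fun (y : E2) (_ : ℝ) => -‖y - z‖^2) x₀ 1‖) = 2 - 2 * ‖x₀ - z‖ := by
  have hg : sGrad (fun (y : E2) (_ : ℝ) => -‖y - z‖^2) x₀ 1 = (-2 : ℝ) • (x₀ - z) := grad_aux z x₀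
  have hh : sHess (fun (y : E2) (_ : ℝ) => -‖y - z‖^2) x₀ 1
    = (-2 : ℝ) • ContinuousLinearMap.id ℝ E2 := hess_aux z x₀
  have hne : (-2 : ℝ) • (x₀ - z) ≠ 0 := smul_ne_zero (by norm_num) (sub_ne_zero.2 h)
  rw [hg, hh]
  refine ⟨hne, ?_⟩
  rw [trProj_aux _ (by rw [norm_smul, norm_inv, norm_norm]; exact inv_mul_cancel₀ (norm_ne_zero_iff.2 hne))]
  simp [tDeriv, norm_smul]
  ring

lemma cd_aux (z : E2) : ContDiff ℝ 2 (fun p : E2 × ℝ => -‖p.1 - z‖^2) :=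
  ((contDiff_fst.sub contDiff_const).norm_sq ℝ).neg

lemma lemT {D : Set E2}
    (hsuper : ParabSupersol (fun _ => 0) Set.univ
      (fun x _ => Set.indicator D (fun _ => (1 : ℝ)) x))
    (z x₀ : E2) (hx : x₀ ∉ D) (h : ∀ᶠ x in 𝓝 x₀, x ∉ D → ‖x₀ - z‖^2 ≤ ‖x - z‖^2) :
    ‖x₀ - z‖ ≤ 1 := by
  by_cases hz : x₀ = z
  · simp [hz]
  obtain ⟨h1, h2⟩ := op_aux z x₀ hz
  have hmin : IsLocalMin (fun p : E2 × ℝ => Set.indicator D (fun _ => (1 : ℝ)) p.1 - -‖p.1 - z‖^2)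
      (x₀, 1) := by
    have hc : ∀ᶠ x in 𝓝 x₀, ‖x₀ - z‖^2 - 1 < ‖x - z‖^2 := by
      have : ContinuousAt (fun x : E2 => ‖x - z‖^2) x₀ := by fun_prop
      exact this.eventually (lt_mem_nhds (by linarith))
    have ht : Tendsto (Prod.fst : E2 × ℝ → E2) (𝓝 (x₀, 1)) (𝓝 x₀) := continuous_fst.tendsto _
    filter_upwards [ht.eventually h, ht.eventually hc] with p hp hp2
    by_cases hpD : p.1 ∈ D
    · simp [hx, hpD]; linarith
    · simp [hx, hpD]; exact hp hpD
  have := (hsuper _ (cd_aux z) x₀ (mem_univ _) 1 one_pos hmin).1 h1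
  rw [h2] at this
  linarith

lemma lemU {D : Set E2} (hDopen : IsOpen D) (hne : D.Nonempty)
    (hsub : ParabSubsol (fun _ => 0) Set.univ
      (fun x _ => Set.indicator (closure D) (fun _ => (1 : ℝ)) x))
    (z₁ z₂ : E2) (h₁ : D ⊆ Metric.ball z₁ 1) (h₂ : D ⊆ Metric.ball z₂ 1) : z₁ = z₂ := by
  by_contra hz
  set m : E2 := midpoint ℝ z₁ z₂ with hm
  have hb : Bornology.IsBounded D := Metric.isBounded_ball.subset h₁
  have hK : IsCompact (closure D) := hb.isCompact_closure
  obtain ⟨x₀, hx₀, hmax⟩ := hK.exists_isMaxOn hne.closure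
    (f := fun x : E2 => ‖x - m‖^2) (by fun_prop)
  have hmax' : ∀ x ∈ closure D, ‖x - m‖^2 ≤ ‖x₀ - m‖^2 := fun x hx => hmax hx
  have hlt : ‖x₀ - m‖^2 < 1 := by
    have hcl : ∀ z, D ⊆ Metric.ball z 1 → ‖x₀ - z‖^2 ≤ 1 := by
      intro z hz
      have := closure_minimal (hz.trans Metric.ball_subset_closedBall) Metric.isClosed_closedBall hx₀
      rw [mem_closedBall_iff_norm] at this
      have := norm_nonneg (x₀ - z)
      nlinarith
    have e1 := hcl _ h₁
    have e2 := hcl _ h₂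
    have hd : 0 < ‖z₁ - z₂‖ := norm_pos_iff.2 (sub_ne_zero.2 hz)
    have hp := parallelogram_law_with_norm ℝ (x₀ - z₁) (x₀ - z₂)
    have q1 : x₀ - z₁ + (x₀ - z₂) = (2 : ℝ) • (x₀ - m) := by
      rw [hm, midpoint_eq_smul_add, smul_sub, smul_smul]; norm_num
      rw [two_smul]; abel
    have q2 : x₀ - z₁ - (x₀ - z₂) = -(z₁ - z₂) := by abel
    rw [q1, q2, norm_neg, norm_smul] at hp
    norm_num at hp
    nlinarith
  have hne0 : x₀ ≠ m := by
    intro hxm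
    rw [← hxm] at hmax'
    have hs : D ⊆ {x₀} := by
      intro x hx
      have := hmax' x (subset_closure hx)
      simp only [sub_self, norm_zero] at this
      have h0 : ‖x - x₀‖ = 0 := by nlinarith [norm_nonneg (x - x₀)]
      exact sub_eq_zero.1 (norm_eq_zero.1 h0)
    have h3 := interior_mono hs
    rw [hDopen.interior_eq, interior_singleton] at h3
    exact hne.ne_empty (subset_empty_iff.1 h3)
  obtain ⟨h1, h2⟩ := op_aux m x₀ hne0
  have hlm : IsLocalMax (fun p : E2 × ℝ => Set.indicator (closure D) (fun _ => (1 : ℝ)) p.1 -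
      -‖p.1 - m‖^2) (x₀, 1) := by
    have hc : ∀ᶠ x in 𝓝 x₀, ‖x - m‖^2 < ‖x₀ - m‖^2 + 1 := by
      have : ContinuousAt (fun x : E2 => ‖x - m‖^2) x₀ := by fun_prop
      exact this.eventually (gt_mem_nhds (by linarith))
    have ht : Tendsto (Prod.fst : E2 × ℝ → E2) (𝓝 (x₀, 1)) (𝓝 x₀) := continuous_fst.tendsto _
    filter_upwards [ht.eventually hc] with p hp
    by_cases hpD : p.1 ∈ closure D
    · have := hmax' _ hpD
      simp only [indicator_of_mem hpD, indicator_of_mem hx₀]; linarith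
    · simp only [indicator_of_mem hx₀, indicator_of_notMem hpD]; linarith
  have := (hsub _ (cd_aux m) x₀ (mem_univ _) 1 one_pos hlm).1 h1
  rw [h2] at this
  nlinarith

def dt (a b x : E2) : ℝ := (a 0 - x 0) * (b 0 - x 0) + (a 1 - x 1) * (b 1 - x 1)
def cr (a b x : E2) : ℝ := (a 0 - x 0) * (b 1 - x 1) - (a 1 - x 1) * (b 0 - x 0)

lemma nsq (x z : E2) : ‖x - z‖^2 = (x 0 - z 0)^2 + (x 1 - z 1)^2 := by
  rw [EuclideanSpace.norm_sq_eq, Fin.sum_univ_two]; simp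

lemma mem_seg {a b x : E2} (hc : cr a b x = 0) (hd : dt a b x ≤ 0) : x ∈ segment ℝ a b := by
  by_cases hab : a = b
  · subst hab
    have : x = a := by
      unfold dt at hd
      ext i; fin_cases i <;> simp <;> nlinarith [sq_nonneg (a 0 - x 0), sq_nonneg (a 1 - x 1)]
    subst this; exact left_mem_segment _ _ _
  · have hpos : 0 < (b 0 - a 0)^2 + (b 1 - a 1)^2 := by
      rw [← nsq]; have := norm_pos_iff.2 (sub_ne_zero.2 (Ne.symm hab)); positivity
    set N := (b 0 - a 0)^2 + (b 1 - a 1)^2 with hN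
    set s := ((x 0 - a 0) * (b 0 - a 0) + (x 1 - a 1) * (b 1 - a 1)) with hs
    -- x = a + (s/N) (b-a)
    unfold cr at hc
    unfold dt at hd
    have k0 : N * (x 0 - a 0) = s * (b 0 - a 0) := by
      rw [hN, hs]; linear_combination -(b 1 - a 1) * hc
    have k1 : N * (x 1 - a 1) = s * (b 1 - a 1) := by
      rw [hN, hs]; linear_combination (b 0 - a 0) * hc
    have hsN : s * s ≤ s * N := by
      have e : N * ((a 0 - x 0) * (b 0 - x 0) + (a 1 - x 1) * (b 1 - x 1)) = s * s - s * N := by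
        linear_combination (-(b 0 - x 0) ) * k0 + (-(b 1 - x 1)) * k1 - s * hs + s * hN
      have : N * ((a 0 - x 0) * (b 0 - x 0) + (a 1 - x 1) * (b 1 - x 1)) ≤ 0 :=
        mul_nonpos_of_nonneg_of_nonpos hpos.le hd
      linarith
    have hs0 : 0 ≤ s := by
      by_contra hneg; push Not at hneg; nlinarith
    have hs1 : s ≤ N := by
      by_contra hneg; push Not at hneg; nlinarith
    rw [segment_eq_image_lineMap]
    refine ⟨s / N, ⟨by positivity, (div_le_one hpos).2 hs1⟩, ?_⟩
    ext i; fin_cases i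
    · simp [AffineMap.lineMap_apply]; field_simp; linarith
    · simp [AffineMap.lineMap_apply]; field_simp; linarith

lemma lemA {D : Set E2} (hDopen : IsOpen D)
    (hsuper : ParabSupersol (fun _ => 0) Set.univ
      (fun x _ => Set.indicator D (fun _ => (1 : ℝ)) x))
    (a b x₁ : E2) (hseg : segment ℝ a b ⊆ D) (hx₁ : x₁ ∉ D) (hdt : dt a b x₁ < 0) :
    ((a 0 - b 0)^2 + (a 1 - b 1)^2) * ((dt a b x₁)^2 + (cr a b x₁)^2) ≤ 4 * (cr a b x₁)^2 := by
  have hcd : Continuous (dt a b) := by unfold dt; fun_prop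
  have hcc : Continuous (cr a b) := by unfold cr; fun_prop
  set K : Set E2 := Dᶜ ∩ {x | dt a b x ≤ 0} with hK
  have hKcl : IsClosed K := hDopen.isClosed_compl.inter (isClosed_le hcd continuous_const)
  have hKb : K ⊆ Metric.closedBall (midpoint ℝ a b) (‖a - b‖ / 2) := by
    rintro x ⟨-, hx⟩
    rw [mem_closedBall_iff_norm]
    have e : ‖x - midpoint ℝ a b‖^2 = dt a b x + (‖a - b‖/2)^2 := by
      rw [div_pow, nsq, nsq, midpoint_eq_smul_add]; unfold dt; simp; ring
    have hx' : dt a b x ≤ 0 := hx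
    exact le_of_sq_le_sq (by linarith) (by positivity)
  have hKc : IsCompact K := (isCompact_closedBall _ _).of_isClosed_subset hKcl hKb
  have hne : ∀ x ∈ K, |cr a b x| ≠ 0 := by
    intro x hx h0
    exact hx.1 (hseg (mem_seg (abs_eq_zero.1 h0) hx.2))
  have hx₁K : x₁ ∈ K := ⟨hx₁, hdt.le⟩
  obtain ⟨x₀, hx₀, hmax⟩ := hKc.exists_isMaxOn ⟨x₁, hx₁K⟩
    (f := fun x => -dt a b x / |cr a b x|)
    (ContinuousOn.div (by fun_prop) (by fun_prop) hne)
  set M := -dt a b x₀ / |cr a b x₀| with hM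
  have hmax' : ∀ x ∈ K, -dt a b x ≤ M * |cr a b x| := by
    intro x hx
    have h1 : -dt a b x / |cr a b x| ≤ M := hmax hx
    rwa [div_le_iff₀ (lt_of_le_of_ne (abs_nonneg _) (hne x hx).symm)] at h1
  have hc1 : 0 < |cr a b x₁| := lt_of_le_of_ne (abs_nonneg _) (hne x₁ hx₁K).symm
  have hc0 : 0 < |cr a b x₀| := lt_of_le_of_ne (abs_nonneg _) (hne x₀ hx₀).symm
  have hMpos : 0 < M := by
    have := hmax' x₁ hx₁K
    by_contra hneg; push Not at hneg; nlinarith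
  have hM0 : -dt a b x₀ = M * |cr a b x₀| := by rw [hM]; field_simp
  have hd0 : dt a b x₀ < 0 := by nlinarith
  obtain ⟨s, hs2, hs⟩ : ∃ s : ℝ, s * s = 1 ∧ |cr a b x₀| = s * cr a b x₀ := by
    rcases abs_cases (cr a b x₀) with h | h
    · exact ⟨1, by norm_num, by rw [h.1, one_mul]⟩
    · exact ⟨-1, by norm_num, by rw [h.1]; ring⟩
  set z : E2 := !₂[(a 0 + b 0 - M * s * (a 1 - b 1)) / 2, (a 1 + b 1 - M * s * (b 0 - a 0)) / 2] with hz
  have z0 : z 0 = (a 0 + b 0 - M * s * (a 1 - b 1)) / 2 := by simp [hz]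
  have z1 : z 1 = (a 1 + b 1 - M * s * (b 0 - a 0)) / 2 := by simp [hz]
  have key : ∀ x, ‖x - z‖^2 = dt a b x + M * (s * cr a b x) + ‖a - z‖^2 := by
    intro x
    rw [nsq, nsq, z0, z1]; unfold dt cr; ring
  have hr : ‖x₀ - z‖ ≤ 1 := by
    apply lemT hsuper z x₀ hx₀.1
    have e1 : ∀ᶠ x in 𝓝 x₀, dt a b x < 0 := hcd.continuousAt.eventually (gt_mem_nhds hd0)
    have e2 : ∀ᶠ x in 𝓝 x₀, 0 < s * cr a b x := by
      have : Continuous (fun x => s * cr a b x) := by fun_prop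
      exact this.continuousAt.eventually (lt_mem_nhds (show 0 < s * cr a b x₀ from hs ▸ hc0))
    filter_upwards [e1, e2] with x h1 h2 hx
    have h3 := hmax' x ⟨hx, h1.le⟩
    have h4 : |cr a b x| = s * cr a b x := by
      have : |s| = 1 := by
        have := abs_mul_abs_self s
        rw [hs2] at this
        nlinarith [abs_nonneg s]
      rw [← abs_of_pos h2, abs_mul, this, one_mul]
    rw [key, key x, ← hs, ← h4]
    linarith
  have hr2 : ‖a - z‖^2 ≤ 1 := by
    have : ‖a - z‖^2 = ‖x₀ - z‖^2 := by rw [key x₀, ← hs]; linarith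
    rw [this]
    have := norm_nonneg (x₀ - z)
    nlinarith
  have hr3 : ((a 0 - b 0)^2 + (a 1 - b 1)^2) * (1 + M^2) ≤ 4 := by
    have : ‖a - z‖^2 = ((a 0 - b 0)^2 + (a 1 - b 1)^2) * (1 + M^2) / 4 := by
      rw [nsq, z0, z1]
      linear_combination (M^2 * ((a 1 - b 1)^2 + (b 0 - a 0)^2)/4) * hs2
    linarith
  have h5 := hmax' x₁ hx₁K
  have h6 : (dt a b x₁)^2 ≤ M^2 * (cr a b x₁)^2 := by
    rw [← sq_abs (cr a b x₁), ← mul_pow, ← neg_sq (dt a b x₁)]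
    exact pow_le_pow_left₀ (by linarith) h5 2
  calc _ ≤ ((a 0 - b 0)^2 + (a 1 - b 1)^2) * (M^2 * (cr a b x₁)^2 + (cr a b x₁)^2) := by gcongr
    _ = (((a 0 - b 0)^2 + (a 1 - b 1)^2) * (1 + M^2)) * (cr a b x₁)^2 := by ring
    _ ≤ _ := by gcongr

/-- the closed inequality -/
def Ineq (a b x : E2) : Prop :=
  ((a 0 - b 0)^2 + (a 1 - b 1)^2) * ((dt a b x)^2 + (cr a b x)^2) ≤ 4 * (cr a b x)^2

lemma ineq_limit (a b x : E2) (S : Set E2) (hb : b ∈ closure S) (hd : dt a b x < 0)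
    (h : ∀ b' ∈ S, dt a b' x < 0 → Ineq a b' x) : Ineq a b x := by
  have hcd : Continuous (fun b' => dt a b' x) := by unfold dt; fun_prop
  have hcl : IsClosed {b' | Ineq a b' x} := by
    unfold Ineq dt cr
    exact isClosed_le (by fun_prop) (by fun_prop)
  have h1 : ∃ᶠ b' in 𝓝 b, b' ∈ S := mem_closure_iff_frequently.1 hb
  have h2 : ∀ᶠ b' in 𝓝 b, dt a b' x < 0 := hcd.continuousAt.eventually (gt_mem_nhds hd)
  have h3 : ∃ᶠ b' in 𝓝 b, b' ∈ {b' | Ineq a b' x} :=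
    (h1.and_eventually h2).mono fun b' hb' => h b' hb'.1 hb'.2
  exact hcl.closure_subset (mem_closure_iff_frequently.2 h3)

lemma lemConvex {D : Set E2} (hDopen : IsOpen D) (hDconn : IsConnected D)
    (hsuper : ParabSupersol (fun _ => 0) Set.univ
      (fun x _ => Set.indicator D (fun _ => (1 : ℝ)) x)) : Convex ℝ D := by
  rw [convex_iff_segment_subset]
  intro a ha
  suffices h : D ⊆ {b | segment ℝ a b ⊆ D} from fun b hb => h hb
  apply hDconn.isPreconnected.subset_of_closure_inter_subset
  · rw [isOpen_iff_mem_nhds]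
    intro b hb
    have : ∀ᶠ b' in 𝓝 b, ∀ t ∈ Icc (0:ℝ) 1, AffineMap.lineMap a b' t ∈ D := by
      apply isCompact_Icc.eventually_forall_of_forall_eventually
      intro t ht
      have hc : Continuous (fun p : E2 × ℝ => AffineMap.lineMap a p.1 p.2) := by
        simp only [AffineMap.lineMap_apply]; fun_prop
      apply hc.continuousAt.eventually (hDopen.mem_nhds _)
      apply hb
      rw [segment_eq_image_lineMap]
      exact ⟨t, ht, rfl⟩
    filter_upwards [this] with b' hb'
    rw [segment_eq_image_lineMap]
    rintro _ ⟨t, ht, rfl⟩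
    exact hb' t ht
  · exact ⟨a, ha, by simpa using ha⟩
  · rintro b ⟨hb, hbD⟩ p hp
    by_contra hpD
    rw [segment_eq_image_lineMap] at hp
    obtain ⟨t, ht, rfl⟩ := hp
    have ht0 : 0 < t := by
      refine lt_of_le_of_ne ht.1 ?_
      rintro rfl; simp at hpD; exact hpD ha
    have ht1 : t < 1 := by
      refine lt_of_le_of_ne ht.2 ?_
      rintro rfl; simp at hpD; exact hpD hbD
    have hab : a ≠ b := by
      rintro rfl; simp at hpD; exact hpD ha
    have hpos : 0 < (a 0 - b 0)^2 + (a 1 - b 1)^2 := by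
      rw [← nsq]; have := norm_pos_iff.2 (sub_ne_zero.2 hab); positivity
    have hdt : dt a b (AffineMap.lineMap a b t) = -(t * (1 - t) * ((a 0 - b 0)^2 + (a 1 - b 1)^2)) := by
      unfold dt; simp [AffineMap.lineMap_apply]; ring
    have hcr : cr a b (AffineMap.lineMap a b t) = 0 := by
      unfold cr; simp [AffineMap.lineMap_apply]; ring
    have hlt : dt a b (AffineMap.lineMap a b t) < 0 := by
      rw [hdt]; have : 0 < 1 - t := by linarith
      have := mul_pos (mul_pos ht0 this) hpos
      linarith
    have := ineq_limit a b _ _ hb hlt (fun b' hb' hd => lemA hDopen hsuper a b' _ hb' hpD hd)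
    unfold Ineq at this
    rw [hcr] at this
    have h2 : 0 < (dt a b (AffineMap.lineMap a b t))^2 := by nlinarith
    have := mul_pos hpos h2
    nlinarith

lemma lemS {D : Set E2} (hDopen : IsOpen D) (hconv : Convex ℝ D)
    (hsuper : ParabSupersol (fun _ => 0) Set.univ
      (fun x _ => Set.indicator D (fun _ => (1 : ℝ)) x))
    (y : E2) (hyc : y ∈ closure D) (hy : y ∉ D) :
    ∃ z, ‖y - z‖ = 1 ∧ D ⊆ Metric.ball z 1 := by
  obtain ⟨f, hf⟩ := geometric_hahn_banach_point_open hconv hDopen hy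
  have hne : D.Nonempty := closure_nonempty_iff.1 ⟨y, hyc⟩
  set w : E2 := (InnerProductSpace.toDual ℝ E2).symm f with hw
  have hfw : ∀ x, f x = ⟪w, x⟫ := fun x => by rw [hw, InnerProductSpace.toDual_symm_apply]
  have hw0 : w ≠ 0 := by
    intro h0
    obtain ⟨p, hp⟩ := hne
    have := hf p hp
    rw [hfw, hfw, h0] at this
    simp at this
  have hwn : 0 < ‖w‖ := norm_pos_iff.2 hw0
  set u : E2 := ‖w‖⁻¹ • w with hu
  have hun : ‖u‖ = 1 := by rw [hu, norm_smul, norm_inv, norm_norm]; exact inv_mul_cancel₀ hwn.ne'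
  have hu2 : u 0 ^ 2 + u 1 ^ 2 = 1 := by
    have := nsq u 0
    rw [sub_zero, hun] at this
    simp at this; linarith
  have hpos : ∀ p ∈ D, 0 < (p 0 - y 0) * u 0 + (p 1 - y 1) * u 1 := by
    intro p hp
    have h1 := hf p hp
    rw [hfw, hfw] at h1
    have h2 : 0 < ⟪u, p - y⟫ := by
      rw [hu, inner_smul_left, inner_sub_right]
      simp only [conj_trivial]
      exact mul_pos (inv_pos.2 hwn) (by linarith)
    have h3 : ⟪u, p - y⟫ = (p 0 - y 0) * u 0 + (p 1 - y 1) * u 1 := by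
      simp [PiLp.inner_apply, Fin.sum_univ_two]
    rwa [h3] at h2
  have main : ∀ p ∈ D, (p 1 - y 1) * u 0 - (p 0 - y 0) * u 1 ≠ 0 →
      (p 0 - y 0)^2 + (p 1 - y 1)^2 ≤ 2 * ((p 0 - y 0) * u 0 + (p 1 - y 1) * u 1) := by
    intro p hp hβ
    have hα := hpos p hp
    set α := (p 0 - y 0) * u 0 + (p 1 - y 1) * u 1 with hαd
    set β := (p 1 - y 1) * u 0 - (p 0 - y 0) * u 1 with hβd
    have hq : (p 0 - y 0)^2 + (p 1 - y 1)^2 = α^2 + β^2 := by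
      rw [hαd, hβd]
      linear_combination (-((p 0 - y 0)^2 + (p 1 - y 1)^2)) * hu2
    have hβ2 : 0 < β^2 := by positivity
    have step : ∀ t ∈ Ioo (0:ℝ) 1, (α^2 + β^2) * (β^2 * (1-t)^2 + α^2) ≤ 4 * α^2 := by
      intro t ht
      set x : E2 := !₂[y 0 - t * β * u 1, y 1 + t * β * u 0] with hx
      have x0 : x 0 = y 0 - t * β * u 1 := by simp [hx]
      have x1 : x 1 = y 1 + t * β * u 0 := by simp [hx]
      have hxD : x ∉ D := by
        intro h
        have := hpos x h
        rw [x0, x1] at this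
        have e : (y 0 - t * β * u 1 - y 0) * u 0 + (y 1 + t * β * u 0 - y 1) * u 1 = 0 := by ring
        linarith
      have hd : dt p y x = -(t * (1-t) * β^2) := by
        unfold dt; rw [x0, x1]
        linear_combination (t^2*β^2) * hu2 + t * β * hβd
      have hc : cr p y x = -(t * β * α) := by
        unfold cr; rw [x0, x1]
        linear_combination t * β * hαd
      have hlt : dt p y x < 0 := by
        rw [hd]
        have := mul_pos (mul_pos ht.1 (sub_pos.2 ht.2)) hβ2
        linarith
      have hI := ineq_limit p y x D hyc hlt (fun b' hb' hd' =>
        lemA hDopen hsuper p b' x (hconv.segment_subset hp hb') hxD hd')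
      unfold Ineq at hI
      rw [hd, hc, hq] at hI
      have htb : 0 < t^2 * β^2 := by have := ht.1; positivity
      have : (t^2 * β^2) * ((α^2 + β^2) * (β^2 * (1-t)^2 + α^2)) ≤ (t^2 * β^2) * (4 * α^2) := by
        linarith [hI]
      exact le_of_mul_le_mul_left this htb
    have lim : (α^2 + β^2) * (β^2 * (1-0)^2 + α^2) ≤ 4 * α^2 := by
      have hc : Continuous (fun t : ℝ => (α^2 + β^2) * (β^2 * (1-t)^2 + α^2)) := by fun_prop
      refine le_of_tendsto ((hc.tendsto 0).mono_left (nhdsWithin_le_nhds (s := Ioi 0))) ?_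
      filter_upwards [Ioo_mem_nhdsGT (zero_lt_one' ℝ)] with t ht using step t ht
    rw [hq]
    refine le_of_sq_le_sq ?_ (by positivity)
    nlinarith
  have main2 : ∀ p ∈ D,
      (p 0 - y 0)^2 + (p 1 - y 1)^2 ≤ 2 * ((p 0 - y 0) * u 0 + (p 1 - y 1) * u 1) := by
    intro p hp
    by_cases hβ : (p 1 - y 1) * u 0 - (p 0 - y 0) * u 1 = 0
    swap
    · exact main p hp hβ
    set τ : E2 := !₂[-u 1, u 0] with hτ
    have hev : ∀ᶠ s : ℝ in 𝓝[≠] 0, p + s • τ ∈ D := by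
      have hc : Continuous (fun s : ℝ => p + s • τ) := by fun_prop
      have := (hc.continuousAt (x := (0:ℝ))).eventually (hDopen.mem_nhds (x := p + (0:ℝ) • τ) (by simpa using hp))
      exact this.filter_mono nhdsWithin_le_nhds
    have hc : Continuous (fun s : ℝ => 2 * ((p 0 - y 0) * u 0 + (p 1 - y 1) * u 1) - s^2) := by fun_prop
    have h0 : (p 0 - y 0)^2 + (p 1 - y 1)^2 ≤
        2 * ((p 0 - y 0) * u 0 + (p 1 - y 1) * u 1) - 0^2 := by
      refine ge_of_tendsto ((hc.tendsto 0).mono_left (nhdsWithin_le_nhds (s := {0}ᶜ))) ?_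
      filter_upwards [hev, self_mem_nhdsWithin] with s hs hs0
      have e0 : (p + s • τ) 0 = p 0 - s * u 1 := by simp [hτ]; ring
      have e1 : (p + s • τ) 1 = p 1 + s * u 0 := by simp [hτ]
      have hb : (p 1 + s * u 0 - y 1) * u 0 - (p 0 - s * u 1 - y 0) * u 1 = s := by
        linear_combination s * hu2 + hβ
      have := main _ hs (by rw [e0, e1, hb]; exact hs0)
      rw [e0, e1] at this
      have k : (p 0 - s * u 1 - y 0)^2 + (p 1 + s * u 0 - y 1)^2 =
        (p 0 - y 0)^2 + (p 1 - y 1)^2 + s^2 := by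
        linear_combination s^2 * hu2 + 2 * s * hβ
      rw [k] at this
      linarith
    linarith
  refine ⟨y + u, by simp [hun], ?_⟩
  have hsub : D ⊆ Metric.closedBall (y + u) 1 := by
    intro p hp
    rw [mem_closedBall_iff_norm]
    refine le_of_sq_le_sq ?_ zero_le_one
    rw [nsq]
    have := main2 p hp
    simp only [PiLp.add_apply]
    nlinarith
  have := interior_mono hsub
  rwa [hDopen.interior_eq, interior_closedBall _ one_ne_zero] at this

/-- (Alexandrov in the viscosity sense, 2D.)  Let `D ⊊ ℝ²` be a
nonempty open connected set which is a stationary set-theoretic solution of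
`-κ - 1 = 0` on `∂D`: the upper semicontinuous `(x,t) ↦ 𝟙_{cl(D)}(x)` is a viscosity
subsolution and the lower semicontinuous `(x,t) ↦ 𝟙_D(x)` is a viscosity supersolution
of `u_t - (div(Du/|Du|)+1)|Du| = 0` in `ℝ² × (0,∞)`.  Then `D` is an open unit disk. -/
theorem stmt_19 (D : Set (EuclideanSpace ℝ (Fin 2))) (hDopen : IsOpen D)
    (hDconn : IsConnected D) (hDne : D ≠ Set.univ)
    (hsub : ParabSubsol (fun _ => 0) Set.univ
      (fun x _ => Set.indicator (closure D) (fun _ => (1 : ℝ)) x))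
    (hsuper : ParabSupersol (fun _ => 0) Set.univ
      (fun x _ => Set.indicator D (fun _ => (1 : ℝ)) x)) :
    ∃ z : EuclideanSpace ℝ (Fin 2), D = Metric.ball z 1 := by
  have hconv := lemConvex hDopen hDconn hsuper
  have front : ∀ y ∈ frontier D, ∃ z, ‖y - z‖ = 1 ∧ D ⊆ Metric.ball z 1 := by
    intro y hy
    rw [hDopen.frontier_eq] at hy
    exact lemS hDopen hconv hsuper y hy.1 hy.2
  obtain ⟨p, hp⟩ := hDconn.nonempty
  have hit : ∀ y ∉ D, ∃ x ∈ segment ℝ p y, x ∈ frontier D := by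
    intro y hy
    have hs : IsPreconnected (segment ℝ p y) := (convex_segment p y).isPreconnected
    by_contra hcon
    push Not at hcon
    refine hy (hs.subset_of_closure_inter_subset hDopen ⟨p, left_mem_segment _ _ _, hp⟩ ?_
      (right_mem_segment _ _ _))
    rintro x ⟨hx1, hx2⟩
    by_contra hxD
    refine hcon x hx2 ?_
    rw [hDopen.frontier_eq]
    exact ⟨hx1, hxD⟩
  obtain ⟨y, hy⟩ := (Set.ne_univ_iff_exists_notMem D).1 hDne
  obtain ⟨x, -, hx⟩ := hit y hy
  obtain ⟨z, -, hz⟩ := front x hx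
  refine ⟨z, hz.antisymm ?_⟩
  intro q hq
  by_contra hqD
  obtain ⟨x', hx's, hx'⟩ := hit q hqD
  obtain ⟨z', hz'1, hz'⟩ := front x' hx'
  have hzz := lemU hDopen hDconn.nonempty hsub z z' hz hz'
  have hxb : x' ∈ Metric.ball z 1 := (convex_ball z 1).segment_subset (hz hp) hq hx's
  rw [mem_ball_iff_norm, hzz, hz'1] at hxb
  exact lt_irrefl _ hxb
end
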